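/- arXiv:1710.01350 — 2 statements merged into one kernel-verified Lean document; each statement's English description precedes it below -/
import Mathlib

section
/- For every finite abelian p-group A and every a ∈ A, one has ∑_B (μ^0(B)/|B|) · ∑_{b ∈ B} |Sur((B,b),(A,a))| = 1/|A|, where the outer sum runs over isomorphism classes of finite abelian p-groups B. (Equivalently: the (A,a)-moment of the pointed Cohen–Lenstra measure μ, i.e. ∑_{(B,b)} |Sur((B,b),(A,a))| μ(B,b) over isomorphism classes of pointed finite abelian p-groups, equals 1/|A|.) -/
/-!
Cohen–Lenstra moments: for every integer `u ≥ 0` and every finite abelian `p`-group `A`,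
the sum over isomorphism classes of finite abelian `p`-groups `B` of `|Sur(B,A)| · μ^u(B)`
equals `|A|^{-u}`.
-/

open scoped Classical

/-- The number of surjective group homomorphisms `B → A`. -/
noncomputable def numSur (B A : Type*) [AddCommGroup B] [AddCommGroup A] : ℕ :=
  Nat.card {f : B →+ A // Function.Surjective f}

/-- The number of automorphisms of `A`. -/
noncomputable def numAut (A : Type*) [AddCommGroup A] : ℕ :=
  Nat.card (A ≃+ A)

/-- The infinite product `∏_{k=1}^∞ (1 - p^{-(k+u)})`. -/
noncomputable def clProd (p u : ℕ) : ℝ :=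
  ∏' k : ℕ, (1 - (p : ℝ) ^ (-((k : ℤ) + 1 + u)))

/-- The Cohen–Lenstra measure `μ^u(A) = |A|^{-u} |Aut(A)|^{-1} ∏_{k=1}^∞ (1 - p^{-(k+u)})`. -/
noncomputable def clMeasure (p u : ℕ) (A : Type*) [AddCommGroup A] : ℝ :=
  ((Nat.card A : ℝ) ^ u)⁻¹ * ((numAut A : ℝ))⁻¹ * clProd p u

/-- The finite abelian `p`-group `G_λ = ⨁_i ℤ/p^{λ_i}ℤ` associated to a partition `λ`,
a finite multiset of positive integers. -/
def CLGroup (p : ℕ) (lam : Multiset ℕ+) : Type :=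
  ∀ i : Fin lam.toList.length, ZMod (p ^ ((lam.toList.get i : ℕ+) : ℕ))

noncomputable instance (p : ℕ) (lam : Multiset ℕ+) : AddCommGroup (CLGroup p lam) := by
  delta CLGroup; infer_instance

/-- The number of surjective group homomorphisms `B → A` sending `b` to `a`. -/
noncomputable def numPointedSur (B : Type*) [AddCommGroup B] (b : B)
    (A : Type*) [AddCommGroup A] (a : A) : ℕ :=
  Nat.card {f : B →+ A // Function.Surjective f ∧ f b = a}


/-!
Pairing each surjection with its kernel and using that `Aut G_λ` acts freely on the surjections onto
`G_λ` gives, for every abelian group `M` and every function `F` of a subgroup,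
`∑_λ |Aut G_λ|⁻¹ ∑_{f ∈ Sur(M, G_λ)} F (ker f) = ∑_L F L`, where `L` runs over the subgroups of `M`
of `p`-power index. Take `M = ℤⁿ` and `F L = |Sur(M/L, A)| [M : L]^{-s}`. A surjection `M/L → A` is
a surjection `φ : M → A` with `L ≤ ker φ`, and `ker φ` is again isomorphic to `ℤⁿ`, so the
right-hand side is `|Sur(ℤⁿ, A)| |A|^{-s} ζ(s)`, where
`ζ(s) = ∑_L [ℤⁿ : L]^{-s} = ∏_{i < n} (1 - p^{i-s})⁻¹`.

For `s = n + u` the two sides contain the probabilities that `n` random elements generate `G_λ` and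
`A`. These increase to `1` as `n → ∞`, while `ζ(n + u)` tends to `∏_{k ≥ 1} (1 - p^{-(k+u)})⁻¹`.
Monotone convergence yields `∑_λ |Sur(G_λ, A)| μ^u(G_λ) = |A|^{-u}`. Finally, every surjection
`f : B → A` has exactly `|B|/|A|` points `b` with `f b = a`, so averaging over `b` divides the
moment by `|A|`.
-/

open Filter Topology
open scoped ENNReal

theorem tsum_const_eq_natCard_mul {α : Type*} [Finite α] (c : ℝ≥0∞) :
    ∑' _ : α, c = Nat.card α * c := by
  rw [ENNReal.tsum_const, ENat.card_eq_coe_natCard, ENat.toENNReal_coe]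

/-! ### Subgroups of prime power index -/

section SubgroupZeta

variable {M : Type*} [AddCommGroup M]

/-- The subgroups of `M` whose index is a power of `p`. -/
abbrev PowIndexSubgroup (p : ℕ) (M : Type*) [AddCommGroup M] : Type _ :=
  {L : AddSubgroup M // ∃ m : ℕ, L.index = p ^ m}

/-- The zeta function `∑_L [M : L]^{-s}` of the subgroups of `M` of `p`-power index. It takes values
in `[0, ∞]`, so that it makes sense without any convergence hypothesis. -/
noncomputable def subgroupZeta (p : ℕ) (M : Type*) [AddCommGroup M] (s : ℕ) : ℝ≥0∞ :=
  ∑' L : PowIndexSubgroup p M, ((L.1.index : ℝ≥0∞) ^ s)⁻¹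

theorem subgroupZeta_congr (p : ℕ) {N : Type*} [AddCommGroup N] (e : M ≃+ N) (s : ℕ) :
    subgroupZeta p M s = subgroupZeta p N s := by
  have index_map (L : AddSubgroup M) : (e.mapAddSubgroup L).index = L.index :=
    AddSubgroup.index_map_equiv L e
  let E : PowIndexSubgroup p M ≃ PowIndexSubgroup p N :=
    e.mapAddSubgroup.toEquiv.subtypeEquiv fun L ↦ by
      simp only [RelIso.coe_fn_toEquiv, index_map]
  rw [subgroupZeta, subgroupZeta, ← E.tsum_eq]
  exact tsum_congr fun L ↦ by rw [← index_map L.1]; rfl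

theorem subgroupZeta_of_subsingleton (p : ℕ) [Subsingleton M] (s : ℕ) :
    subgroupZeta p M s = 1 := by
  have index_eq_one (L : AddSubgroup M) : L.index = 1 := by
    rw [Subsingleton.elim L ⊤, AddSubgroup.index_top]
  have : Unique (PowIndexSubgroup p M) :=
    { default := ⟨⊤, 0, by simp⟩, uniq := fun _ ↦ Subtype.ext (Subsingleton.elim _ _) }
  simp [subgroupZeta, tsum_fintype, index_eq_one]

theorem index_eq_index_comap_inl_mul_index_map_snd {N : Type*} [AddCommGroup N]
    (K : AddSubgroup (M × N)) :
    K.index = (K.comap (AddMonoidHom.inl M N)).index * (K.map (AddMonoidHom.snd M N)).index := by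
  have ker_snd : (AddMonoidHom.snd M N).ker = (AddMonoidHom.inl M N).range := by
    ext ⟨x, y⟩
    rw [AddMonoidHom.mem_ker, AddMonoidHom.mem_range]
    simp [eq_comm]
  have range_snd : (AddMonoidHom.snd M N).range = ⊤ :=
    AddMonoidHom.range_eq_top.2 Prod.snd_surjective
  rw [AddSubgroup.index_map, AddSubgroup.index_comap, range_snd, AddSubgroup.index_top, mul_one,
    ker_snd, ← AddSubgroup.relIndex_sup_left, AddSubgroup.relIndex_mul_index le_sup_left]

/-- The subgroup of `M × ℤ` generated by `L × 0` and `(m, d)`, where `m` is any lift of `x` to `M`.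
Every subgroup of `M × ℤ` is of this form. -/
def extendByInt (L : AddSubgroup M) (d : ℤ) (x : M ⧸ L) : AddSubgroup (M × ℤ) where
  carrier := {z | ∃ c : ℤ, z.2 = c * d ∧ (z.1 : M ⧸ L) = c • x}
  zero_mem' := ⟨0, by simp⟩
  add_mem' := by
    rintro y z ⟨b, hy, hy'⟩ ⟨c, hz, hz'⟩
    exact ⟨b + c, by simp [hy, hz, add_mul], by simp [hy', hz', add_smul]⟩
  neg_mem' := by
    rintro z ⟨c, hz, hz'⟩
    exact ⟨-c, by simp [hz], by simp [hz']⟩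

theorem mem_extendByInt {L : AddSubgroup M} {d : ℤ} {x : M ⧸ L} {z : M × ℤ} :
    z ∈ extendByInt L d x ↔ ∃ c : ℤ, z.2 = c * d ∧ (z.1 : M ⧸ L) = c • x :=
  Iff.rfl

theorem mk_mem_extendByInt {L : AddSubgroup M} {d : ℤ} (hd : d ≠ 0) {x : M ⧸ L} {m : M} :
    (m, d) ∈ extendByInt L d x ↔ (m : M ⧸ L) = x := by
  simp [mem_extendByInt, right_eq_mul₀ hd]

theorem comap_inl_extendByInt (L : AddSubgroup M) {d : ℤ} (hd : d ≠ 0) (x : M ⧸ L) :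
    (extendByInt L d x).comap (AddMonoidHom.inl M ℤ) = L := by
  ext m
  simp [mem_extendByInt, hd]

theorem map_snd_extendByInt (L : AddSubgroup M) (d : ℤ) (x : M ⧸ L) :
    (extendByInt L d x).map (AddMonoidHom.snd M ℤ) = AddSubgroup.zmultiples d := by
  obtain ⟨m, rfl⟩ := QuotientAddGroup.mk_surjective x
  ext t
  rw [AddSubgroup.mem_map, AddSubgroup.mem_zmultiples_iff]
  constructor
  · rintro ⟨z, ⟨c, hz, -⟩, rfl⟩
    exact ⟨c, by simp [hz]⟩
  · rintro ⟨c, rfl⟩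
    exact ⟨(c • m, c • d), ⟨c, by simp, by simp⟩, rfl⟩

theorem index_extendByInt (L : AddSubgroup M) {d : ℤ} (hd : d ≠ 0) (x : M ⧸ L) :
    (extendByInt L d x).index = L.index * d.natAbs := by
  rw [index_eq_index_comap_inl_mul_index_map_snd, comap_inl_extendByInt L hd, map_snd_extendByInt,
    Int.index_zmultiples]

theorem extendByInt_comap_inl {K : AddSubgroup (M × ℤ)} {m : M} {d : ℤ} (hm : (m, d) ∈ K)
    (hK : K.map (AddMonoidHom.snd M ℤ) = AddSubgroup.zmultiples d) :
    extendByInt (K.comap (AddMonoidHom.inl M ℤ)) d m = K := by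
  ext ⟨a, b⟩
  have mem_iff (c : ℤ) : (a : M ⧸ K.comap (AddMonoidHom.inl M ℤ)) = c • (m : M ⧸ _) ↔
      (a, c * d) ∈ K := by
    rw [← QuotientAddGroup.mk_zsmul, QuotientAddGroup.eq_iff_sub_mem, AddSubgroup.mem_comap,
      ← AddSubgroup.add_mem_cancel_right K (K.zsmul_mem hm c)]
    simp
  simp only [mem_extendByInt, mem_iff]
  constructor
  · rintro ⟨c, rfl, h⟩
    exact h
  · intro h
    obtain ⟨c, rfl⟩ : b ∈ AddSubgroup.zmultiples d := hK ▸ ⟨(a, b), h, rfl⟩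
    exact ⟨c, by simp, by simpa using h⟩

theorem extendByInt_injective (L : AddSubgroup M) {d : ℤ} (hd : d ≠ 0) :
    Function.Injective (extendByInt L d) := by
  intro x y h
  obtain ⟨m, rfl⟩ := QuotientAddGroup.mk_surjective x
  exact (mk_mem_extendByInt hd).1 (h ▸ (mk_mem_extendByInt hd).2 rfl)

theorem exists_eq_extendByInt {K : AddSubgroup (M × ℤ)} {d : ℕ}
    (hd : (K.map (AddMonoidHom.snd M ℤ)).index = d) :
    ∃ x, extendByInt (K.comap (AddMonoidHom.inl M ℤ)) d x = K := by
  obtain ⟨g, hg⟩ := Int.subgroup_cyclic (K.map (AddMonoidHom.snd M ℤ))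
  have map_snd_eq : K.map (AddMonoidHom.snd M ℤ) = AddSubgroup.zmultiples (d : ℤ) := by
    rw [← AddSubgroup.zmultiples_eq_closure] at hg
    rw [← hd, hg, Int.index_zmultiples, Int.zmultiples_natAbs]
  obtain ⟨⟨m, _⟩, hm, rfl⟩ : (d : ℤ) ∈ K.map (AddMonoidHom.snd M ℤ) :=
    map_snd_eq ▸ AddSubgroup.mem_zmultiples _
  exact ⟨m, extendByInt_comap_inl hm map_snd_eq⟩

end SubgroupZeta

section PrimePower

variable {p : ℕ} [hp : Fact p.Prime]

theorem index_extendByInt_pow {M : Type*} [AddCommGroup M] (L : AddSubgroup M) (k : ℕ)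
    (x : M ⧸ L) : (extendByInt L (p ^ k : ℕ) x).index = L.index * p ^ k := by
  rw [index_extendByInt L (by exact_mod_cast (NeZero.ne (p ^ k))), Int.natAbs_natCast]

variable (p) in
/-- The parametrization of the subgroups of `M × ℤ` of `p`-power index by triples `(L, k, x)`
consisting of a subgroup `L` of `M` of `p`-power index, an exponent `k` and a class `x` modulo
`L`. -/
noncomputable def extendByIntPow (M : Type*) [AddCommGroup M]
    (t : Σ L : PowIndexSubgroup p M, ℕ × (M ⧸ L.1)) : PowIndexSubgroup p (M × ℤ) :=
  ⟨extendByInt t.1.1 (p ^ t.2.1 : ℕ) t.2.2, by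
    obtain ⟨m, hL⟩ := t.1.2
    exact ⟨m + t.2.1, by rw [index_extendByInt_pow, hL, pow_add]⟩⟩

theorem extendByIntPow_injective (M : Type*) [AddCommGroup M] :
    Function.Injective (extendByIntPow p M) := by
  have pow_ne_zero (k : ℕ) : ((p ^ k : ℕ) : ℤ) ≠ 0 := by exact_mod_cast NeZero.ne (p ^ k)
  rintro ⟨⟨L, m, hL⟩, k, x⟩ ⟨⟨L', hL'⟩, k', x'⟩ h
  replace h : extendByInt L (p ^ k : ℕ) x = extendByInt L' (p ^ k' : ℕ) x' :=
    congrArg Subtype.val h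
  obtain rfl : L = L' := by
    rw [← comap_inl_extendByInt L (pow_ne_zero k) x, h, comap_inl_extendByInt L' (pow_ne_zero k')]
  obtain rfl : k = k' := by
    have index_eq := congrArg AddSubgroup.index h
    rw [index_extendByInt_pow, index_extendByInt_pow, hL,
      Nat.mul_right_inj (NeZero.ne (p ^ m))] at index_eq
    exact Nat.pow_right_injective hp.out.two_le index_eq
  rw [extendByInt_injective L (pow_ne_zero k) h]

theorem extendByIntPow_surjective (M : Type*) [AddCommGroup M] :
    Function.Surjective (extendByIntPow p M) := by
  rintro ⟨K, m, hK⟩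
  have index_mul := (index_eq_index_comap_inl_mul_index_map_snd K).symm.trans hK
  obtain ⟨i, -, hi⟩ := (Nat.dvd_prime_pow hp.out).1 (Dvd.intro _ index_mul)
  obtain ⟨k, -, hk⟩ := (Nat.dvd_prime_pow hp.out).1 (Dvd.intro_left _ index_mul)
  obtain ⟨x, hx⟩ := exists_eq_extendByInt hk
  exact ⟨⟨⟨K.comap (AddMonoidHom.inl M ℤ), i, hi⟩, k, x⟩, Subtype.ext hx⟩

theorem PowIndexSubgroup.index_ne_zero {M : Type*} [AddCommGroup M] (L : PowIndexSubgroup p M) :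
    L.1.index ≠ 0 := by
  obtain ⟨L, m, hL⟩ := L
  simpa only [hL] using NeZero.ne (p ^ m)

theorem subgroupZeta_prod_int (M : Type*) [AddCommGroup M] (s : ℕ) :
    subgroupZeta p (M × ℤ) (s + 1) = subgroupZeta p M s * (1 - (p : ℝ≥0∞)⁻¹ ^ (s + 1))⁻¹ := by
  let E := Equiv.ofBijective _ ⟨extendByIntPow_injective (p := p) M, extendByIntPow_surjective M⟩
  have term (L : PowIndexSubgroup p M) (k : ℕ) (x : M ⧸ L.1) :
      (((E ⟨L, k, x⟩).1.index : ℝ≥0∞) ^ (s + 1))⁻¹ =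
        ((L.1.index : ℝ≥0∞) ^ (s + 1))⁻¹ * ((p : ℝ≥0∞)⁻¹ ^ (s + 1)) ^ k := by
    change (((extendByInt L.1 (p ^ k : ℕ) x).index : ℝ≥0∞) ^ (s + 1))⁻¹ = _
    rw [index_extendByInt_pow, Nat.cast_mul, Nat.cast_pow, ENNReal.inv_pow,
      ENNReal.mul_inv (by simp) (by simp), mul_pow, ENNReal.inv_pow, ENNReal.inv_pow,
      pow_right_comm]
  rw [subgroupZeta, subgroupZeta, ← E.tsum_eq, ENNReal.tsum_sigma', ← ENNReal.tsum_mul_right]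
  refine tsum_congr fun L ↦ ?_
  have index_ne_zero := L.index_ne_zero
  have : L.1.FiniteIndex := ⟨index_ne_zero⟩
  have card_mul_inv : (Nat.card (M ⧸ L.1) : ℝ≥0∞) * ((L.1.index : ℝ≥0∞) ^ (s + 1))⁻¹ =
      ((L.1.index : ℝ≥0∞) ^ s)⁻¹ := by
    rw [← AddSubgroup.index_eq_card, ENNReal.inv_pow, ENNReal.inv_pow, pow_succ', ← mul_assoc,
      ENNReal.mul_inv_cancel (by exact_mod_cast index_ne_zero) (by simp), one_mul]
  simp_rw [ENNReal.tsum_prod', term, tsum_const_eq_natCard_mul, ← mul_assoc, card_mul_inv]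
  rw [ENNReal.tsum_mul_left, ENNReal.tsum_geometric]

/-- Splitting off the first coordinate of `ℤ^{n+1}`. -/
noncomputable def finSuccIntAddEquiv (n : ℕ) : (Fin (n + 1) → ℤ) ≃+ (Fin n → ℤ) × ℤ :=
  ((Fin.consLinearEquiv ℤ fun _ : Fin (n + 1) ↦ ℤ).symm.trans
    (LinearEquiv.prodComm ℤ _ _)).toAddEquiv

theorem subgroupZeta_fin_int (n u : ℕ) :
    subgroupZeta p (Fin n → ℤ) (n + u) =
      ∏ i ∈ Finset.range n, (1 - (p : ℝ≥0∞)⁻¹ ^ (i + 1 + u))⁻¹ := by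
  induction n with
  | zero => simp [subgroupZeta_of_subsingleton]
  | succ n ih =>
    rw [subgroupZeta_congr p (finSuccIntAddEquiv n), add_right_comm, subgroupZeta_prod_int, ih,
      Finset.prod_range_succ, add_right_comm n 1 u]

end PrimePower

/-! ### The groups `G_λ` classify the finite abelian `p`-groups -/

theorem sum_get_toList {α : Type*} (s : Multiset α) (f : α → ℕ) :
    ∑ i, f (s.toList.get i) = (s.map f).sum := by
  simp [Fin.sum_univ_fun_getElem, Multiset.sum_map_toList]

/-- The first sum is the size of the first `k` columns of a partition, so this is a second
difference. -/
theorem sum_map_min_second_difference (lam : Multiset ℕ+) (k : ℕ+) :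
    (lam.map fun a : ℕ+ ↦ min ((k : ℕ) - 1) a).sum + (lam.map fun a : ℕ+ ↦ min ((k : ℕ) + 1) a).sum
      + lam.count k = 2 * (lam.map fun a : ℕ+ ↦ min (k : ℕ) a).sum := by
  induction lam using Multiset.induction with
  | empty => simp
  | cons a s ih =>
    simp only [Multiset.map_cons, Multiset.sum_cons, Multiset.count_cons, ← PNat.coe_inj] at ih ⊢
    have := k.pos
    split_ifs <;> omega

theorem eq_of_forall_sum_map_min_eq {lam mu : Multiset ℕ+}
    (h : ∀ k : ℕ, (lam.map fun a : ℕ+ ↦ min k a).sum = (mu.map fun a : ℕ+ ↦ min k a).sum) :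
    lam = mu := by
  ext k
  have hlam := sum_map_min_second_difference lam k
  have hmu := sum_map_min_second_difference mu k
  rw [h, h, h] at hlam
  omega

theorem card_torsion_zmod_pow (p : ℕ) [NeZero p] (k e : ℕ) :
    Nat.card {x : ZMod (p ^ e) // p ^ k • x = 0} = p ^ min k e := by
  have gcd_eq : (p ^ e).gcd (p ^ k) = p ^ min k e := by
    rcases le_total k e with h | h
    · rw [min_eq_left h, Nat.gcd_eq_right (pow_dvd_pow _ h)]
    · rw [min_eq_right h, Nat.gcd_eq_left (pow_dvd_pow _ h)]
  have card_ker := IsAddCyclic.card_nsmulAddMonoidHom_ker (G := ZMod (p ^ e)) (p ^ k)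
  rwa [Nat.card_zmod, gcd_eq] at card_ker

theorem card_fiber_eq_count_map {ι α : Type*} [Fintype ι] (f : ι → α) (c : α) :
    Nat.card {i // f i = c} = (Finset.univ.val.map f).count c := by
  rw [Nat.card_eq_fintype_card, Fintype.card_subtype, Multiset.count_map, Finset.card_def,
    Finset.filter_val]
  simp only [eq_comm]

theorem finite_of_card_eq_pow {p : ℕ} [NeZero p] {B : Type*} (hB : ∃ m : ℕ, Nat.card B = p ^ m) :
    Finite B := by
  obtain ⟨m, hm⟩ := hB
  exact Nat.finite_of_card_ne_zero (hm ▸ NeZero.ne (p ^ m))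

namespace CLGroup

theorem card (p : ℕ) (lam : Multiset ℕ+) :
    Nat.card (CLGroup p lam) = p ^ (lam.map (↑· : ℕ+ → ℕ)).sum := by
  rw [CLGroup, Nat.card_pi]
  simp_rw [Nat.card_zmod]
  rw [Finset.prod_pow_eq_pow_sum, sum_get_toList lam (↑· : ℕ+ → ℕ)]

theorem card_torsion (p : ℕ) [NeZero p] (k : ℕ) (lam : Multiset ℕ+) :
    Nat.card {x : CLGroup p lam // p ^ k • x = 0} =
      p ^ (lam.map fun a : ℕ+ ↦ min k a).sum := by
  have torsion_pi : {x : CLGroup p lam // p ^ k • x = 0} ≃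
      ∀ i : Fin lam.toList.length, {y : ZMod (p ^ (lam.toList.get i : ℕ)) // p ^ k • y = 0} :=
    (Equiv.subtypeEquivRight fun _ ↦ funext_iff).trans
      (Equiv.subtypePiEquivPi (p := fun _ y ↦ p ^ k • y = 0))
  rw [Nat.card_congr torsion_pi, Nat.card_pi]
  simp_rw [card_torsion_zmod_pow]
  rw [Finset.prod_pow_eq_pow_sum, sum_get_toList lam fun a : ℕ+ ↦ min k a]

instance (p : ℕ) [NeZero p] (lam : Multiset ℕ+) : Finite (CLGroup p lam) := by
  unfold CLGroup
  infer_instance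

theorem nonempty_pi_zmod_addEquiv (p : ℕ) {ι : Type*} [Fintype ι] (k : ι → ℕ+) :
    Nonempty ((∀ i, ZMod (p ^ (k i : ℕ))) ≃+ CLGroup p (Finset.univ.val.map k)) := by
  set lam : Multiset ℕ+ := Finset.univ.val.map k
  have map_get : Finset.univ.val.map lam.toList.get = lam := by
    rw [Fin.univ_val_map, List.ofFn_get, Multiset.coe_toList]
  have fiber_equiv (c : ℕ+) : Nonempty ({i // k i = c} ≃ {j // lam.toList.get j = c}) := by
    rw [← Finite.card_eq, card_fiber_eq_count_map, card_fiber_eq_count_map, map_get]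
  let σ := Equiv.ofFiberEquiv fun c ↦ (fiber_equiv c).some
  have get_σ (i : ι) : lam.toList.get (σ i) = k i := Equiv.ofFiberEquiv_map _ i
  exact ⟨(AddEquiv.piCongrRight fun i ↦ (ZMod.ringEquivCongr (by rw [get_σ])).toAddEquiv).trans
    (RingEquiv.piCongrLeft (fun j ↦ ZMod (p ^ (lam.toList.get j : ℕ))) σ).toAddEquiv⟩

variable {p : ℕ} [hp : Fact p.Prime]

theorem eq_of_addEquiv {lam mu : Multiset ℕ+} (e : CLGroup p lam ≃+ CLGroup p mu) : lam = mu := by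
  refine eq_of_forall_sum_map_min_eq fun k ↦ Nat.pow_right_injective hp.out.two_le ?_
  simp only [← card_torsion]
  exact Nat.card_congr (e.toEquiv.subtypeEquiv fun x ↦ by simp [← map_nsmul])

theorem exists_nonempty_addEquiv {B : Type*} [AddCommGroup B] (hB : ∃ m : ℕ, Nat.card B = p ^ m) :
    ∃ lam, Nonempty (B ≃+ CLGroup p lam) := by
  have := finite_of_card_eq_pow hB
  obtain ⟨m, hm⟩ := hB
  obtain ⟨ι, _, n, one_lt, ⟨e⟩⟩ := AddCommGroup.equiv_directSum_zmod_of_finite' B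
  replace e : B ≃+ ∀ i, ZMod (n i) := e.trans (DirectSum.addEquivProd _)
  have prod_eq : ∏ i, n i = p ^ m := by
    rw [← hm, Nat.card_congr e.toEquiv, Nat.card_pi]
    simp
  have exists_exponent (i : ι) : ∃ k : ℕ+, n i = p ^ (k : ℕ) := by
    obtain ⟨k, -, hk⟩ := (Nat.dvd_prime_pow hp.out).1
      (prod_eq ▸ Finset.dvd_prod_of_mem n (Finset.mem_univ i))
    have k_ne_zero : k ≠ 0 := by
      rintro rfl
      simpa [hk] using one_lt i
    exact ⟨⟨k, Nat.pos_of_ne_zero k_ne_zero⟩, hk⟩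
  choose k hk using exists_exponent
  obtain rfl : n = fun i ↦ p ^ (k i : ℕ) := funext hk
  exact ⟨_, (nonempty_pi_zmod_addEquiv p k).map e.trans⟩

end CLGroup

/-! ### Counting surjections by their kernels -/

/-- The surjective homomorphisms `B → A`; their number is `numSur B A`. -/
abbrev Sur (B A : Type*) [AddCommGroup B] [AddCommGroup A] : Type _ :=
  {f : B →+ A // Function.Surjective f}

section Sur

variable {M A B : Type*} [AddCommGroup M] [AddCommGroup A] [AddCommGroup B]

theorem Sur.index_ker (f : Sur M B) : f.1.ker.index = Nat.card B := by
  rw [AddSubgroup.index_ker, AddMonoidHom.range_eq_top.2 f.2, AddSubgroup.card_top]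

theorem numSur_congr (e : M ≃+ B) : numSur M A = numSur B A :=
  Nat.card_congr <| (AddEquiv.addMonoidHomCongrLeftEquiv e).subtypeEquiv fun f ↦
    (e.symm.surjective.of_comp_iff f).symm

theorem numSur_quotient (L : AddSubgroup M) :
    numSur (M ⧸ L) A = Nat.card {φ : Sur M A // L ≤ φ.1.ker} :=
  Nat.card_congr
    { toFun f := ⟨⟨f.1.comp (QuotientAddGroup.mk' L),
        f.2.comp (QuotientAddGroup.mk'_surjective L)⟩, fun x hx ↦ by
          simp [(QuotientAddGroup.eq_zero_iff x).2 hx]⟩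
      invFun φ := ⟨QuotientAddGroup.lift L φ.1.1 φ.2,
        QuotientAddGroup.lift_surjective_of_surjective L φ.1.1 φ.1.2 φ.2⟩
      left_inv f := by ext; simp
      right_inv φ := by ext; simp }

/-- A surjection with kernel `L` is the same thing as an isomorphism from `M ⧸ L`. -/
noncomputable def surWithKerEquiv (L : AddSubgroup M) :
    {f : Sur M B // f.1.ker = L} ≃ (M ⧸ L ≃+ B) where
  toFun f := QuotientAddGroup.liftEquiv L f.1.2 f.2.symm
  invFun σ := ⟨⟨σ.toAddMonoidHom.comp (QuotientAddGroup.mk' L),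
    σ.surjective.comp (QuotientAddGroup.mk'_surjective L)⟩, by ext; simp⟩
  left_inv f := by ext; simp
  right_inv σ := by
    ext x
    obtain ⟨x, rfl⟩ := QuotientAddGroup.mk_surjective x
    simp

theorem numAut_ne_zero (B : Type*) [AddCommGroup B] [Finite B] : numAut B ≠ 0 :=
  Nat.card_pos.ne'

theorem card_addEquiv_eq_numAut (e : M ≃+ B) : Nat.card (M ≃+ B) = numAut B :=
  Nat.card_congr
    { toFun σ := e.symm.trans σ
      invFun τ := e.trans τ
      left_inv σ := by ext; simp
      right_inv τ := by ext; simp }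

end Sur

section PrimePower

variable {p : ℕ} [hp : Fact p.Prime]

theorem tsum_card_addEquiv_mul_inv_numAut {Q : Type*} [AddCommGroup Q]
    (hQ : ∃ m : ℕ, Nat.card Q = p ^ m) :
    ∑' lam, (Nat.card (Q ≃+ CLGroup p lam) : ℝ≥0∞) * (numAut (CLGroup p lam) : ℝ≥0∞)⁻¹ = 1 := by
  obtain ⟨mu, ⟨e⟩⟩ := CLGroup.exists_nonempty_addEquiv hQ
  rw [tsum_eq_single mu]
  · rw [card_addEquiv_eq_numAut e,
      ENNReal.mul_inv_cancel (by exact_mod_cast numAut_ne_zero _) (by simp)]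
  · intro lam hlam
    have : IsEmpty (Q ≃+ CLGroup p lam) :=
      ⟨fun σ ↦ hlam (CLGroup.eq_of_addEquiv (σ.symm.trans e))⟩
    simp

/-- The group `Aut G_λ` acts freely on the surjections onto `G_λ`, with the kernel as a complete
invariant. -/
theorem tsum_inv_numAut_mul_tsum_sur {M : Type*} [AddCommGroup M] (F : AddSubgroup M → ℝ≥0∞) :
    ∑' lam, (numAut (CLGroup p lam) : ℝ≥0∞)⁻¹ * ∑' f : Sur M (CLGroup p lam), F f.1.ker =
      ∑' L : PowIndexSubgroup p M, F L.1 := by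
  let ker (lam : Multiset ℕ+) (f : Sur M (CLGroup p lam)) : PowIndexSubgroup p M :=
    ⟨f.1.ker, _, f.index_ker.trans (CLGroup.card p lam)⟩
  have fiber_equiv (lam : Multiset ℕ+) (L : PowIndexSubgroup p M) :
      {f // ker lam f = L} ≃ (M ⧸ L.1 ≃+ CLGroup p lam) :=
    (Equiv.subtypeEquivRight fun _ ↦ Subtype.ext_iff).trans (surWithKerEquiv L.1)
  have tsum_by_kernel (lam : Multiset ℕ+) : ∑' f : Sur M (CLGroup p lam), F f.1.ker =
      ∑' L : PowIndexSubgroup p M, Nat.card (M ⧸ L.1 ≃+ CLGroup p lam) * F L.1 := by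
    rw [← ENNReal.tsum_fiberwise _ (ker lam)]
    refine tsum_congr fun L ↦ ?_
    have : L.1.FiniteIndex := ⟨L.index_ne_zero⟩
    calc ∑' f : ker lam ⁻¹' {L}, F f.1.1.ker
        = ∑' _ : {f // ker lam f = L}, F L.1 := tsum_congr fun f ↦
          congrArg (fun K : PowIndexSubgroup p M ↦ F K.1) f.2
      _ = ∑' _ : M ⧸ L.1 ≃+ CLGroup p lam, F L.1 := (fiber_equiv lam L).tsum_eq fun _ ↦ F L.1
      _ = _ := tsum_const_eq_natCard_mul _
  simp_rw [tsum_by_kernel, ← ENNReal.tsum_mul_left]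
  rw [ENNReal.tsum_comm]
  refine tsum_congr fun L ↦ ?_
  simp_rw [← mul_assoc, mul_comm (numAut _ : ℝ≥0∞)⁻¹]
  rw [ENNReal.tsum_mul_right, tsum_card_addEquiv_mul_inv_numAut L.2, one_mul]

theorem tsum_powIndexSubgroup_le {M : Type*} [AddCommGroup M] (K : PowIndexSubgroup p M) (s : ℕ) :
    ∑' L : {L : PowIndexSubgroup p M // L.1 ≤ K.1}, ((L.1.1.index : ℝ≥0∞) ^ s)⁻¹ =
      ((K.1.index : ℝ≥0∞) ^ s)⁻¹ * subgroupZeta p K.1 s := by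
  have isPow_iff (L : AddSubgroup K.1) :
      (∃ m, (L.map K.1.subtype).index = p ^ m) ↔ ∃ m, L.index = p ^ m := by
    obtain ⟨k, hk⟩ := K.2
    rw [AddSubgroup.index_map_subtype, hk]
    constructor
    · rintro ⟨m, hm⟩
      obtain ⟨j, -, hj⟩ := (Nat.dvd_prime_pow hp.out).1 (Dvd.intro _ hm)
      exact ⟨j, hj⟩
    · rintro ⟨m, hm⟩
      exact ⟨m + k, by rw [hm, pow_add]⟩
  let E : PowIndexSubgroup p K.1 ≃ {L : PowIndexSubgroup p M // L.1 ≤ K.1} :=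
    { toFun L := ⟨⟨L.1.map K.1.subtype, (isPow_iff L.1).2 L.2⟩, AddSubgroup.map_subtype_le L.1⟩
      invFun L := ⟨L.1.1.addSubgroupOf K.1, (isPow_iff _).1 <| by
        rw [AddSubgroup.map_addSubgroupOf_eq_of_le L.2]
        exact L.1.2⟩
      left_inv L :=
        Subtype.ext (AddSubgroup.comap_map_eq_self_of_injective K.1.subtype_injective L.1)
      right_inv L := Subtype.ext (Subtype.ext (AddSubgroup.map_addSubgroupOf_eq_of_le L.2)) }
  rw [subgroupZeta, ← E.tsum_eq, ← ENNReal.tsum_mul_left]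
  refine tsum_congr fun L ↦ ?_
  change (((L.1.map K.1.subtype).index : ℝ≥0∞) ^ s)⁻¹ = _
  rw [AddSubgroup.index_map_subtype, Nat.cast_mul, mul_pow, ENNReal.mul_inv (by simp) (by simp),
    mul_comm]

theorem tsum_numSur_quotient_mul_inv_index_pow {M A : Type*} [AddCommGroup M] [AddCommGroup A]
    (hA : ∃ m : ℕ, Nat.card A = p ^ m) (s : ℕ) [Finite (Sur M A)] :
    ∑' L : PowIndexSubgroup p M, (numSur (M ⧸ L.1) A : ℝ≥0∞) * ((L.1.index : ℝ≥0∞) ^ s)⁻¹ =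
      ((Nat.card A : ℝ≥0∞) ^ s)⁻¹ * ∑' φ : Sur M A, subgroupZeta p φ.1.ker s := by
  let w (L : PowIndexSubgroup p M) (φ : Sur M A) : ℝ≥0∞ :=
    if L.1 ≤ φ.1.ker then ((L.1.index : ℝ≥0∞) ^ s)⁻¹ else 0
  have tsum_over_sur (L : PowIndexSubgroup p M) :
      ∑' φ, w L φ = numSur (M ⧸ L.1) A * ((L.1.index : ℝ≥0∞) ^ s)⁻¹ := by
    rw [numSur_quotient, ← tsum_const_eq_natCard_mul]
    exact (tsum_subtype {φ : Sur M A | L.1 ≤ φ.1.ker} fun _ ↦ _).symm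
  have tsum_over_subgroup (φ : Sur M A) :
      ∑' L, w L φ = ((Nat.card A : ℝ≥0∞) ^ s)⁻¹ * subgroupZeta p φ.1.ker s := by
    rw [← φ.index_ker, ← tsum_powIndexSubgroup_le ⟨φ.1.ker, φ.index_ker ▸ hA⟩ s]
    exact (tsum_subtype {L : PowIndexSubgroup p M | L.1 ≤ φ.1.ker} fun L ↦ _).symm
  simp_rw [← tsum_over_sur]
  rw [ENNReal.tsum_comm]
  simp_rw [tsum_over_subgroup, ENNReal.tsum_mul_left]

end PrimePower

/-! ### Homomorphisms out of `ℤⁿ` -/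

instance {M B : Type*} [AddGroup M] [AddGroup B] [AddGroup.FG M] [Finite B] : Finite (M →+ B) := by
  obtain ⟨S, hS, hfin⟩ := AddGroup.fg_iff.1 ‹AddGroup.FG M›
  have : Finite S := hfin
  refine Finite.of_injective (fun (f : M →+ B) (x : S) ↦ f x) fun f g h ↦ ?_
  exact AddMonoidHom.eq_of_eqOn_dense hS fun x hx ↦ congrFun h ⟨x, hx⟩

theorem card_fin_int_addMonoidHom (n : ℕ) (B : Type*) [AddCommGroup B] :
    Nat.card ((Fin n → ℤ) →+ B) = Nat.card B ^ n := by
  have e : ((Fin n → ℤ) →+ B) ≃ (Fin n → B) :=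
    (addMonoidHomLequivInt ℤ).toEquiv.trans ((Pi.basisFun ℤ (Fin n)).constr ℤ).symm.toEquiv
  rw [Nat.card_congr e, Nat.card_fun, Nat.card_fin]

theorem nonempty_addEquiv_of_finiteIndex {M : Type*} [AddCommGroup M] [Module.Free ℤ M]
    [Module.Finite ℤ M] (K : AddSubgroup M) [K.FiniteIndex] : Nonempty (K ≃+ M) := by
  have : Module.Free ℤ K := inferInstanceAs (Module.Free ℤ (AddSubgroup.toIntSubmodule K))
  have : Module.Finite ℤ K := inferInstanceAs (Module.Finite ℤ (AddSubgroup.toIntSubmodule K))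
  exact ⟨(LinearEquiv.ofFinrankEq _ _ (AddSubgroup.finrank_eq_of_finiteIndex K)).toAddEquiv⟩

/-! ### Random elements generate -/

/-- The probability that `n` independent uniform elements of the finite abelian group `B` generate
it; an `n`-tuple is encoded as a homomorphism `ℤⁿ → B`. -/
noncomputable def surProb (n : ℕ) (B : Type*) [AddCommGroup B] : ℝ≥0∞ :=
  numSur (Fin n → ℤ) B * ((Nat.card B : ℝ≥0∞) ^ n)⁻¹

section SurProb

variable {M B : Type*} [AddCommGroup M] [AddCommGroup B]

theorem numSur_mul_card_le_numSur_prod_int [AddGroup.FG M] [Finite B] :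
    numSur M B * Nat.card B ≤ numSur (M × ℤ) B := by
  let extend (f : Sur M B × B) : Sur (M × ℤ) B :=
    ⟨f.1.1.coprod (zmultiplesHom B f.2), fun b ↦ by
      obtain ⟨m, rfl⟩ := f.1.2 b
      exact ⟨(m, 0), by simp⟩⟩
  have extend_injective : Function.Injective extend := by
    rintro ⟨f, b⟩ ⟨g, c⟩ h
    have apply_eq (z : M × ℤ) : f.1 z.1 + z.2 • b = g.1 z.1 + z.2 • c :=
      DFunLike.congr_fun (congrArg Subtype.val h) z
    ext m
    · simpa using apply_eq (m, 0)
    · simpa using apply_eq (0, 1)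
  rw [numSur, ← Nat.card_prod]
  exact Nat.card_le_card_of_injective extend extend_injective

variable (B) [Finite B]

theorem card_pow_ne_zero (n : ℕ) : (Nat.card B : ℝ≥0∞) ^ n ≠ 0 :=
  pow_ne_zero n (by exact_mod_cast Nat.card_pos.ne')

theorem surProb_monotone : Monotone fun n ↦ surProb n B := by
  refine monotone_nat_of_le_succ fun n ↦ ?_
  have card_ne_zero : (Nat.card B : ℝ≥0∞) ≠ 0 := by exact_mod_cast Nat.card_pos.ne'
  calc (numSur (Fin n → ℤ) B : ℝ≥0∞) * ((Nat.card B : ℝ≥0∞) ^ n)⁻¹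
      = (numSur (Fin n → ℤ) B * Nat.card B : ℕ) * ((Nat.card B : ℝ≥0∞) ^ (n + 1))⁻¹ := by
        rw [Nat.cast_mul, pow_succ', ENNReal.mul_inv (by simp) (by simp), mul_assoc,
          ENNReal.mul_inv_cancel_left card_ne_zero (by simp)]
    _ ≤ numSur ((Fin n → ℤ) × ℤ) B * ((Nat.card B : ℝ≥0∞) ^ (n + 1))⁻¹ := by
        gcongr
        exact numSur_mul_card_le_numSur_prod_int
    _ = surProb (n + 1) B := by rw [surProb, numSur_congr (finSuccIntAddEquiv n)]

theorem surProb_le_one (n : ℕ) : surProb n B ≤ 1 := by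
  refine ENNReal.div_le_of_le_mul ?_
  rw [one_mul, ← Nat.cast_pow, ← card_fin_int_addMonoidHom]
  exact_mod_cast Nat.card_le_card_of_injective _ Subtype.val_injective

/-- Union bound: a tuple that does not generate `B` lies in a proper subgroup. -/
theorem one_le_surProb_add_sum [Fintype {H : AddSubgroup B // H ≠ ⊤}] (n : ℕ) :
    1 ≤ surProb n B + ∑ H : {H : AddSubgroup B // H ≠ ⊤}, (H.1.index : ℝ≥0∞)⁻¹ ^ n := by
  let forget : Sur (Fin n → ℤ) B ⊕ (Σ H : {H : AddSubgroup B // H ≠ ⊤}, (Fin n → ℤ) →+ H.1) →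
      ((Fin n → ℤ) →+ B) := Sum.elim Subtype.val fun f ↦ f.1.1.subtype.comp f.2
  have forget_surjective : Function.Surjective forget := by
    intro f
    by_cases hf : f.range = ⊤
    · exact ⟨.inl ⟨f, AddMonoidHom.range_eq_top.1 hf⟩, rfl⟩
    · exact ⟨.inr ⟨⟨f.range, hf⟩, f.rangeRestrict⟩, rfl⟩
  have card_le := Nat.card_le_card_of_surjective forget forget_surjective
  simp only [Nat.card_sum, Nat.card_sigma, card_fin_int_addMonoidHom] at card_le
  have card_ratio (H : AddSubgroup B) :
      (Nat.card H : ℝ≥0∞) ^ n * ((Nat.card B : ℝ≥0∞) ^ n)⁻¹ = (H.index : ℝ≥0∞)⁻¹ ^ n := by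
    rw [← H.card_mul_index, Nat.cast_mul, mul_pow, ENNReal.mul_inv (by simp) (by simp),
      ENNReal.mul_inv_cancel_left (card_pow_ne_zero H n) (by simp), ENNReal.inv_pow]
  calc (1 : ℝ≥0∞) = (Nat.card B : ℝ≥0∞) ^ n * ((Nat.card B : ℝ≥0∞) ^ n)⁻¹ :=
        (ENNReal.mul_inv_cancel (card_pow_ne_zero B n) (by simp)).symm
    _ ≤ (numSur (Fin n → ℤ) B + ∑ H : {H : AddSubgroup B // H ≠ ⊤}, (Nat.card H.1 : ℝ≥0∞) ^ n) *
          ((Nat.card B : ℝ≥0∞) ^ n)⁻¹ := by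
        gcongr
        exact_mod_cast card_le
    _ = _ := by simp_rw [add_mul, Finset.sum_mul, card_ratio, surProb]

theorem tendsto_surProb : Tendsto (fun n ↦ surProb n B) atTop (𝓝 1) := by
  have := Fintype.ofFinite {H : AddSubgroup B // H ≠ ⊤}
  have inv_index_lt_one (H : {H : AddSubgroup B // H ≠ ⊤}) : (H.1.index : ℝ≥0∞)⁻¹ < 1 := by
    have index_ne_zero := H.1.index_ne_zero_of_finite
    have index_ne_one := mt AddSubgroup.index_eq_one.1 H.2
    rw [ENNReal.inv_lt_one]
    exact_mod_cast (by lia : 1 < H.1.index)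
  have union_tendsto : Tendsto
      (fun n ↦ ∑ H : {H : AddSubgroup B // H ≠ ⊤}, (H.1.index : ℝ≥0∞)⁻¹ ^ n) atTop (𝓝 0) := by
    simpa using tendsto_finsetSum Finset.univ fun H _ ↦
      ENNReal.tendsto_pow_atTop_nhds_zero_of_lt_one (inv_index_lt_one H)
  have lower_tendsto := ENNReal.Tendsto.sub (tendsto_const_nhds (x := (1 : ℝ≥0∞))) union_tendsto
    (.inl ENNReal.one_ne_top)
  rw [tsub_zero] at lower_tendsto
  exact tendsto_of_tendsto_of_tendsto_of_le_of_le lower_tendsto tendsto_const_nhds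
    (fun n ↦ tsub_le_iff_right.2 (one_le_surProb_add_sum B n)) (surProb_le_one B)

end SurProb

theorem tendsto_tsum_of_monotone {α : Type*} {f : ℕ → α → ℝ≥0∞} {F : α → ℝ≥0∞}
    (hf : ∀ a, Monotone fun n ↦ f n a) (hF : ∀ a, Tendsto (fun n ↦ f n a) atTop (𝓝 (F a))) :
    Tendsto (fun n ↦ ∑' a, f n a) atTop (𝓝 (∑' a, F a)) := by
  let _ : MeasurableSpace α := ⊤
  simpa only [MeasureTheory.lintegral_count] using
    MeasureTheory.lintegral_tendsto_of_tendsto_of_monotone (μ := MeasureTheory.Measure.count)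
      (fun n ↦ measurable_from_top.aemeasurable) (.of_forall hf) (.of_forall hF)

/-! ### The constant `∏ (1 - p^{-(k+u)})` -/

section ClProd

variable {p : ℕ} (hp : 1 < p) (u : ℕ)

include hp in
theorem inv_pow_add_one_add_lt_one (k : ℕ) : (p : ℝ)⁻¹ ^ (k + 1 + u) < 1 :=
  pow_lt_one₀ (by positivity) (inv_lt_one_of_one_lt₀ (by exact_mod_cast hp)) (by lia)

include hp in
theorem summable_norm_neg_inv_pow : Summable fun k ↦ ‖-(p : ℝ)⁻¹ ^ (k + 1 + u)‖ := by
  have inv_lt_one : (p : ℝ)⁻¹ < 1 := inv_lt_one_of_one_lt₀ (by exact_mod_cast hp)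
  simpa [add_assoc] using
    (summable_nat_add_iff (1 + u)).2 (summable_geometric_of_lt_one (by positivity) inv_lt_one)

theorem clProd_eq_tprod_one_add_neg (p u : ℕ) :
    clProd p u = ∏' k : ℕ, (1 + -(p : ℝ)⁻¹ ^ (k + 1 + u)) := by
  refine tprod_congr fun k ↦ ?_
  rw [← sub_eq_add_neg, zpow_neg, inv_pow]
  norm_cast

include hp in
theorem tendsto_prod_clProd :
    Tendsto (fun n ↦ ∏ i ∈ Finset.range n, (1 - (p : ℝ)⁻¹ ^ (i + 1 + u))) atTop
      (𝓝 (clProd p u)) := by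
  rw [clProd_eq_tprod_one_add_neg]
  simpa only [← sub_eq_add_neg] using
    (multipliable_one_add_of_summable (summable_norm_neg_inv_pow hp u)).hasProd.tendsto_prod_nat

include hp in
theorem clProd_pos : 0 < clProd p u := by
  refine lt_of_le_of_ne' (ge_of_tendsto' (tendsto_prod_clProd hp u) fun n ↦
    Finset.prod_nonneg fun i _ ↦ sub_nonneg.2 (inv_pow_add_one_add_lt_one hp u i).le) ?_
  rw [clProd_eq_tprod_one_add_neg]
  refine tprod_one_add_ne_zero_of_summable (fun k ↦ ?_) (summable_norm_neg_inv_pow hp u)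
  rw [← sub_eq_add_neg]
  exact (sub_pos.2 (inv_pow_add_one_add_lt_one hp u k)).ne'

end ClProd

section PrimePower

variable {p : ℕ} [hp : Fact p.Prime]

theorem subgroupZeta_fin_int_eq_ofReal (n u : ℕ) :
    subgroupZeta p (Fin n → ℤ) (n + u) =
      ENNReal.ofReal (∏ i ∈ Finset.range n, (1 - (p : ℝ)⁻¹ ^ (i + 1 + u)))⁻¹ := by
  have factor_pos (i : ℕ) : 0 < 1 - (p : ℝ)⁻¹ ^ (i + 1 + u) :=
    sub_pos.2 (inv_pow_add_one_add_lt_one hp.out.one_lt u i)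
  rw [subgroupZeta_fin_int, ← Finset.prod_inv_distrib,
    ENNReal.ofReal_prod_of_nonneg fun i _ ↦ (inv_pos.2 (factor_pos i)).le]
  refine Finset.prod_congr rfl fun i _ ↦ ?_
  rw [ENNReal.ofReal_inv_of_pos (factor_pos i), ENNReal.ofReal_sub _ (by positivity),
    ENNReal.ofReal_one, ENNReal.ofReal_pow (by positivity),
    ENNReal.ofReal_inv_of_pos (by exact_mod_cast hp.out.pos), ENNReal.ofReal_natCast]

theorem tendsto_subgroupZeta_fin_int (u : ℕ) :
    Tendsto (fun n ↦ subgroupZeta p (Fin n → ℤ) (n + u)) atTop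
      (𝓝 (ENNReal.ofReal (clProd p u)⁻¹)) := by
  simp_rw [subgroupZeta_fin_int_eq_ofReal]
  exact ENNReal.tendsto_ofReal
    ((tendsto_prod_clProd hp.out.one_lt u).inv₀ (clProd_pos hp.out.one_lt u).ne')

end PrimePower

/-! ### Moments -/

theorem tsum_numSur_quotient_ker (A : Type*) [AddCommGroup A] (B : Type*) [AddCommGroup B]
    [Finite B] (n u : ℕ) :
    ∑' f : Sur (Fin n → ℤ) B, (numSur ((Fin n → ℤ) ⧸ f.1.ker) A : ℝ≥0∞) *
        ((f.1.ker.index : ℝ≥0∞) ^ (n + u))⁻¹ =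
      numSur B A * ((Nat.card B : ℝ≥0∞) ^ u)⁻¹ * surProb n B := by
  have numSur_eq (f : Sur (Fin n → ℤ) B) : numSur ((Fin n → ℤ) ⧸ f.1.ker) A = numSur B A :=
    numSur_congr (QuotientAddGroup.quotientKerEquivOfSurjective f.1 f.2)
  have card_sur : Nat.card (Sur (Fin n → ℤ) B) = numSur (Fin n → ℤ) B := rfl
  simp_rw [numSur_eq, Sur.index_ker]
  rw [tsum_const_eq_natCard_mul, pow_add, ENNReal.mul_inv (by simp) (by simp), card_sur, surProb]
  ring

theorem tsum_subgroupZeta_ker (p : ℕ) (M : Type*) [AddCommGroup M] [Module.Free ℤ M]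
    [Module.Finite ℤ M] (A : Type*) [AddCommGroup A] [Finite A] (s : ℕ) :
    ∑' φ : Sur M A, subgroupZeta p φ.1.ker s = numSur M A * subgroupZeta p M s := by
  have : AddGroup.FG M := Module.Finite.iff_addGroup_fg.1 ‹_›
  rw [numSur, ← tsum_const_eq_natCard_mul]
  refine tsum_congr fun φ ↦ ?_
  have : φ.1.ker.FiniteIndex := ⟨φ.index_ker ▸ Nat.card_pos.ne'⟩
  exact subgroupZeta_congr p (nonempty_addEquiv_of_finiteIndex φ.1.ker).some s

section Moments

variable {p : ℕ} [hp : Fact p.Prime] {A : Type*} [AddCommGroup A]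

theorem tsum_inv_numAut_mul_numSur_mul_surProb (hA : ∃ m : ℕ, Nat.card A = p ^ m) (n u : ℕ) :
    ∑' lam, (numAut (CLGroup p lam) : ℝ≥0∞)⁻¹ * (numSur (CLGroup p lam) A *
        ((Nat.card (CLGroup p lam) : ℝ≥0∞) ^ u)⁻¹ * surProb n (CLGroup p lam)) =
      ((Nat.card A : ℝ≥0∞) ^ u)⁻¹ * (surProb n A * subgroupZeta p (Fin n → ℤ) (n + u)) := by
  have := finite_of_card_eq_pow hA
  simp_rw [← tsum_numSur_quotient_ker]
  rw [tsum_inv_numAut_mul_tsum_sur fun L ↦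
      (numSur ((Fin n → ℤ) ⧸ L) A : ℝ≥0∞) * ((L.index : ℝ≥0∞) ^ (n + u))⁻¹,
    tsum_numSur_quotient_mul_inv_index_pow hA, tsum_subgroupZeta_ker, pow_add,
    ENNReal.mul_inv (by simp) (by simp), surProb]
  ring

theorem tsum_inv_numAut_mul_numSur (hA : ∃ m : ℕ, Nat.card A = p ^ m) (u : ℕ) :
    ∑' lam, (numAut (CLGroup p lam) : ℝ≥0∞)⁻¹ *
        (numSur (CLGroup p lam) A * ((Nat.card (CLGroup p lam) : ℝ≥0∞) ^ u)⁻¹) =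
      ((Nat.card A : ℝ≥0∞) ^ u)⁻¹ * ENNReal.ofReal (clProd p u)⁻¹ := by
  have := finite_of_card_eq_pow hA
  have weight_ne_top (B : Type) [AddCommGroup B] [Finite B] :
      (numSur B A : ℝ≥0∞) * ((Nat.card B : ℝ≥0∞) ^ u)⁻¹ ≠ ∞ :=
    ENNReal.mul_ne_top (by simp) (ENNReal.inv_ne_top.2 (card_pow_ne_zero B u))
  have inv_numAut_ne_top (B : Type) [AddCommGroup B] [Finite B] : (numAut B : ℝ≥0∞)⁻¹ ≠ ∞ :=
    ENNReal.inv_ne_top.2 (by exact_mod_cast numAut_ne_zero B)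
  have tendsto_left := tendsto_tsum_of_monotone
    (fun lam ↦ ((surProb_monotone (CLGroup p lam)).const_mul' _).const_mul' _)
    fun lam ↦ ENNReal.Tendsto.const_mul (ENNReal.Tendsto.const_mul
      (tendsto_surProb (CLGroup p lam)) (.inr (weight_ne_top (CLGroup p lam))))
      (.inr (inv_numAut_ne_top (CLGroup p lam)))
  have tendsto_right := ENNReal.Tendsto.const_mul (a := ((Nat.card A : ℝ≥0∞) ^ u)⁻¹)
    (ENNReal.Tendsto.mul (tendsto_surProb A) (.inl one_ne_zero)
      (tendsto_subgroupZeta_fin_int (p := p) u) (.inr ENNReal.one_ne_top))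
    (.inr (ENNReal.inv_ne_top.2 (card_pow_ne_zero A u)))
  simp_rw [tsum_inv_numAut_mul_numSur_mul_surProb hA] at tendsto_left
  simpa only [mul_one, one_mul] using tendsto_nhds_unique tendsto_left tendsto_right

theorem hasSum_numSur_mul_clMeasure (hA : ∃ m : ℕ, Nat.card A = p ^ m) (u : ℕ) :
    HasSum (fun lam ↦ numSur (CLGroup p lam) A * clMeasure p u (CLGroup p lam))
      ((Nat.card A : ℝ) ^ u)⁻¹ := by
  have := finite_of_card_eq_pow hA
  have clProd_pos := clProd_pos hp.out.one_lt u
  have tsum_eq := tsum_inv_numAut_mul_numSur hA u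
  have tsum_ne_top : ((Nat.card A : ℝ≥0∞) ^ u)⁻¹ * ENNReal.ofReal (clProd p u)⁻¹ ≠ ∞ :=
    ENNReal.mul_ne_top (ENNReal.inv_ne_top.2 (card_pow_ne_zero A u)) ENNReal.ofReal_ne_top
  have summand_eq (lam : Multiset ℕ+) : numSur (CLGroup p lam) A * clMeasure p u (CLGroup p lam) =
      ((numAut (CLGroup p lam) : ℝ≥0∞)⁻¹ * (numSur (CLGroup p lam) A *
        ((Nat.card (CLGroup p lam) : ℝ≥0∞) ^ u)⁻¹)).toReal * clProd p u := by
    simp only [clMeasure, ENNReal.toReal_mul, ENNReal.toReal_inv, ENNReal.toReal_pow,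
      ENNReal.toReal_natCast]
    ring
  have limit_eq : ((Nat.card A : ℝ) ^ u)⁻¹ =
      (((Nat.card A : ℝ≥0∞) ^ u)⁻¹ * ENNReal.ofReal (clProd p u)⁻¹).toReal * clProd p u := by
    rw [ENNReal.toReal_mul, ENNReal.toReal_ofReal (inv_pos.2 clProd_pos).le,
      inv_mul_cancel_right₀ clProd_pos.ne']
    simp
  rw [← tsum_eq] at tsum_ne_top
  rw [limit_eq, ← tsum_eq, ENNReal.tsum_toReal_eq (ENNReal.ne_top_of_tsum_ne_top tsum_ne_top)]
  simp_rw [summand_eq]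
  exact (ENNReal.hasSum_toReal tsum_ne_top).mul_right _

theorem card_fiber_mul_card {B : Type*} [AddCommGroup B] (f : Sur B A) (a : A) :
    Nat.card {b // f.1 b = a} * Nat.card A = Nat.card B := by
  rw [← f.1.ker.card_mul_index, f.index_ker]
  exact congrArg (· * _) (Nat.card_congr (AddMonoidHom.fiberEquivKerOfSurjective f.2 a))

theorem sum_numPointedSur_mul_card {B : Type*} [AddCommGroup B] [Fintype B] [Finite A] (a : A) :
    (∑ b : B, numPointedSur B b A a) * Nat.card A = numSur B A * Nat.card B := by
  have := Fintype.ofFinite (Sur B A)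
  let swap : (Σ b : B, {f : B →+ A // Function.Surjective f ∧ f b = a}) ≃
      Σ f : Sur B A, {b // f.1 b = a} :=
    { toFun t := ⟨⟨t.2.1, t.2.2.1⟩, t.1, t.2.2.2⟩
      invFun t := ⟨t.2.1, t.1.1, t.1.2, t.2.2⟩ }
  have card_eq : ∑ b : B, numPointedSur B b A a = ∑ f : Sur B A, Nat.card {b // f.1 b = a} := by
    simp only [numPointedSur]
    rw [← Nat.card_sigma, Nat.card_congr swap, Nat.card_sigma]
  rw [card_eq, Finset.sum_mul]
  simp_rw [card_fiber_mul_card]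
  rw [Finset.sum_const, smul_eq_mul, Finset.card_univ, ← Nat.card_eq_fintype_card, numSur]

theorem cl_pointed_moments_general (hA : ∃ m : ℕ, Nat.card A = p ^ m) (a : A) (u : ℕ) :
    HasSum (fun lam ↦ clMeasure p u (CLGroup p lam) / (Nat.card (CLGroup p lam) : ℝ) *
        ∑' b : CLGroup p lam, (numPointedSur (CLGroup p lam) b A a : ℝ))
      ((Nat.card A : ℝ) ^ (u + 1))⁻¹ := by
  have := finite_of_card_eq_pow hA
  have average_eq (B : Type) [AddCommGroup B] [Finite B] :
      (∑' b : B, (numPointedSur B b A a : ℝ)) / Nat.card B = numSur B A / Nat.card A := by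
    have := Fintype.ofFinite B
    rw [tsum_fintype, div_eq_div_iff (by exact_mod_cast Nat.card_pos.ne')
      (by exact_mod_cast Nat.card_pos.ne')]
    exact_mod_cast sum_numPointedSur_mul_card (B := B) a
  have summand_eq (lam : Multiset ℕ+) :
      clMeasure p u (CLGroup p lam) / (Nat.card (CLGroup p lam) : ℝ) *
          ∑' b : CLGroup p lam, (numPointedSur (CLGroup p lam) b A a : ℝ) =
        numSur (CLGroup p lam) A * clMeasure p u (CLGroup p lam) / Nat.card A := by
    rw [div_mul_eq_mul_div, mul_div_assoc, average_eq]
    ring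
  simp_rw [summand_eq]
  rw [pow_succ, mul_inv, ← div_eq_mul_inv]
  exact (hasSum_numSur_mul_clMeasure hA u).div_const _

end Moments

/-- Pointed moments: for every finite abelian `p`-group `A` and every `a ∈ A`,
`∑_B (μ^0(B)/|B|) ∑_{b ∈ B} |Sur((B,b),(A,a))| = 1/|A|`, where the outer sum runs over
isomorphism classes of finite abelian `p`-groups `B`. -/
theorem cl_pointed_moments (p : ℕ) (hp : p.Prime) (hodd : Odd p)
    (A : Type) [AddCommGroup A] (hA : ∃ n : ℕ, Nat.card A = p ^ n) (a : A) :
    ∑' lam : Multiset ℕ+,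
      (clMeasure p 0 (CLGroup p lam) / (Nat.card (CLGroup p lam) : ℝ)) *
        ∑' b : CLGroup p lam, (numPointedSur (CLGroup p lam) b A a : ℝ)
      = (Nat.card A : ℝ)⁻¹ := by
  have : Fact p.Prime := ⟨hp⟩
  simpa using (cl_pointed_moments_general hA a 0).tsum_eq
end

section
/- The sum over isomorphism classes of finite abelian p-groups A of μ^0(A)/|A| equals 1 − 1/p; that is, ∑_A |Aut(A)|^{-1} · |A|^{-1} · ∏_{k=1}^∞ (1 − p^{-k}) = 1 − p^{-1}. (Equivalently: under the pointed Cohen–Lenstra measure μ, the probability that the marked element is the identity is 1 − p^{-1}.) -/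
/-!
Cohen–Lenstra moments: for every integer `u ≥ 0` and every finite abelian `p`-group `A`,
the sum over isomorphism classes of finite abelian `p`-groups `B` of `|Sur(B,A)| · μ^u(B)`
equals `|A|^{-u}`.
-/

open scoped Classical

/-!
Factoring a surjection `ℤᵏ → A` through the quotient by its kernel gives
`|Sur(ℤᵏ, A)| = |Aut A| · #{L ≤ ℤᵏ : ℤᵏ / L ≅ A}`. Therefore the sum over `A` of
`|A|⁻ᵘ |Aut A|⁻¹ · |Sur(ℤᵏ, A)| / |A|ᵏ` equals the sum of `[ℤᵏ : L]^{-(u + k)}` over the subgroups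
`L ≤ ℤᵏ` of `p`-power index, which is `∏_{j < k} (1 - p^{-(u + j + 1)})⁻¹` by induction on `k`: a
subgroup of `G × ℤ` is determined by its intersection `L` with `G`, its projection `nℤ`, and a
coset in `G ⧸ L`. As `k → ∞`, the probability `|Sur(ℤᵏ, A)| / |A|ᵏ` that `k` random elements
generate `A` increases to `1`, so every `μ^u` has total mass `1`. The theorem follows because
`μ^u(A) / |A|` is `(1 - p^{-(u + 1)}) μ^{u + 1}(A)`.
-/

open Filter Finset
open scoped ENNReal Topology

namespace CohenLenstra

/-! ### Classification of finite abelian `p`-groups by partitions -/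

theorem exists_equiv_of_map_univ_eq {α β γ : Type*} [Fintype α] [Fintype β] {f : α → γ}
    {g : β → γ} (h : univ.val.map f = univ.val.map g) : ∃ σ : α ≃ β, ∀ x, g (σ x) = f x := by
  have card_fiber_eq (c : γ) : Fintype.card {x // f x = c} = Fintype.card {x // g x = c} := by
    have := congrArg (Multiset.count c) h
    rw [Multiset.count_map, Multiset.count_map] at this
    rw [Fintype.card_subtype, Fintype.card_subtype, card_def, card_def, filter_val, filter_val]
    simpa only [eq_comm] using this
  exact ⟨Equiv.ofFiberEquiv fun c => Fintype.equivOfCardEq (card_fiber_eq c),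
    Equiv.ofFiberEquiv_map _⟩

/- The second difference of `i ↦ min x i` is minus the indicator function of `{x}`. -/
theorem two_mul_sum_map_min (l : Multiset ℕ+) (a : ℕ+) :
    2 * (l.map fun x : ℕ+ => min (x : ℕ) a).sum =
      (l.map fun x : ℕ+ => min (x : ℕ) (a - 1)).sum +
        (l.map fun x : ℕ+ => min (x : ℕ) (a + 1)).sum + l.count a := by
  induction l using Multiset.induction_on with
  | empty => simp
  | cons x s ih =>
    simp only [Multiset.map_cons, Multiset.sum_cons, Multiset.count_cons]
    have ha := a.pos
    have hx := x.pos
    split_ifs with h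
    · subst h; omega
    · have : (a : ℕ) ≠ x := fun h' => h (PNat.coe_injective h')
      omega

theorem eq_of_forall_sum_map_min_eq {l m : Multiset ℕ+}
    (h : ∀ i, (l.map fun x : ℕ+ => min (x : ℕ) i).sum =
      (m.map fun x : ℕ+ => min (x : ℕ) i).sum) : l = m := by
  ext a
  have hl := two_mul_sum_map_min l a
  have hm := two_mul_sum_map_min m a
  rw [h, h, h] at hl
  omega

theorem gcd_pow_pow_eq_pow_min (a m n : ℕ) : (a ^ m).gcd (a ^ n) = a ^ min m n := by
  rcases le_total m n with h | h
  · rw [min_eq_left h, Nat.gcd_eq_left (pow_dvd_pow a h)]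
  · rw [min_eq_right h, Nat.gcd_eq_right (pow_dvd_pow a h)]

theorem sum_univ_toList_get {α M : Type*} [AddCommMonoid M] (s : Multiset α) (f : α → M) :
    ∑ i, f (s.toList.get i) = (s.map f).sum := by
  conv_rhs => rw [← s.coe_toList, Multiset.map_coe, Multiset.sum_coe]
  exact Fin.sum_univ_fun_getElem _ f

theorem card_zmod_torsion (n d : ℕ) [NeZero n] :
    Nat.card {x : ZMod n // d • x = 0} = n.gcd d := by
  have := IsAddCyclic.card_nsmulAddMonoidHom_ker (ZMod n) d
  rwa [Nat.card_zmod] at this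

theorem card_clGroup (p : ℕ) (lam : Multiset ℕ+) :
    Nat.card (CLGroup p lam) = p ^ (lam.map fun x : ℕ+ => (x : ℕ)).sum := by
  unfold CLGroup
  simp only [Nat.card_pi, Nat.card_zmod, prod_pow_eq_pow_sum,
    sum_univ_toList_get lam fun x : ℕ+ => (x : ℕ)]

theorem nonempty_clGroup_map_univ_addEquiv {ι : Type*} [Fintype ι] (p : ℕ) (m : ι → ℕ+) :
    Nonempty (CLGroup p (univ.val.map m) ≃+ ∀ i, ZMod (p ^ (m i : ℕ))) := by
  obtain ⟨σ, hσ⟩ := exists_equiv_of_map_univ_eq (f := (univ.val.map m).toList.get) (g := m)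
    (by rw [Fin.univ_val_map, List.ofFn_get, Multiset.coe_toList])
  have relabel : CLGroup p (univ.val.map m) ≃+ ∀ i, ZMod (p ^ (m (σ i) : ℕ)) :=
    AddEquiv.piCongrRight fun i => (ZMod.ringEquivCongr (by rw [hσ])).toAddEquiv
  exact ⟨relabel.trans (RingEquiv.piCongrLeft (fun i => ZMod (p ^ (m i : ℕ))) σ).toAddEquiv⟩

section Prime

variable {p : ℕ} [hp : Fact p.Prime]

instance finite_clGroup (lam : Multiset ℕ+) : Finite (CLGroup p lam) :=
  Nat.finite_of_card_ne_zero (by rw [card_clGroup]; exact pow_ne_zero _ hp.out.ne_zero)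

theorem card_clGroup_torsion (lam : Multiset ℕ+) (i : ℕ) :
    Nat.card {x : CLGroup p lam // p ^ i • x = 0} =
      p ^ (lam.map fun x : ℕ+ => min (x : ℕ) i).sum := by
  have componentwise : {x : CLGroup p lam // p ^ i • x = 0} ≃
      ∀ j : Fin lam.toList.length, {x : ZMod (p ^ (lam.toList.get j : ℕ)) // p ^ i • x = 0} :=
    (Equiv.subtypeEquivRight fun x => funext_iff).trans
      (Equiv.subtypePiEquivPi
        (p := fun (j : Fin lam.toList.length) (y : ZMod (p ^ (lam.toList.get j : ℕ))) =>
          p ^ i • y = 0))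
  rw [Nat.card_congr componentwise, Nat.card_pi]
  simp only [card_zmod_torsion, gcd_pow_pow_eq_pow_min, prod_pow_eq_pow_sum,
    sum_univ_toList_get lam fun x : ℕ+ => min (x : ℕ) i]

theorem eq_of_clGroup_addEquiv {l m : Multiset ℕ+} (e : CLGroup p l ≃+ CLGroup p m) : l = m := by
  refine eq_of_forall_sum_map_min_eq fun i => Nat.pow_right_injective hp.out.two_le ?_
  simp only [← card_clGroup_torsion]
  refine Nat.card_congr (e.toEquiv.subtypeEquiv fun x => ?_)
  change _ ↔ p ^ i • e x = 0
  rw [← map_nsmul, EmbeddingLike.map_eq_zero_iff]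

theorem exists_addEquiv_clGroup (G : Type*) [AddCommGroup G] {N : ℕ} (hN : Nat.card G = p ^ N) :
    ∃ lam, Nonempty (G ≃+ CLGroup p lam) := by
  have : Finite G := Nat.finite_of_card_ne_zero (hN ▸ pow_ne_zero _ hp.out.ne_zero)
  obtain ⟨ι, _, n, one_lt_n, ⟨e⟩⟩ := AddCommGroup.equiv_directSum_zmod_of_finite' G
  let e' := e.trans (DirectSum.addEquivProd _)
  have prod_n : ∏ i, n i = p ^ N := by
    rw [← hN, Nat.card_congr e'.toEquiv, Nat.card_pi]
    simp only [Nat.card_zmod]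
  have n_eq_pow (i : ι) : ∃ m : ℕ+, n i = p ^ (m : ℕ) := by
    obtain ⟨m, -, hm⟩ := (Nat.dvd_prime_pow hp.out).1 (prod_n ▸ dvd_prod_of_mem n (mem_univ i))
    have m_ne_zero : m ≠ 0 := by
      rintro rfl
      exact (one_lt_n i).ne' (by rw [hm, pow_zero])
    exact ⟨⟨m, Nat.pos_of_ne_zero m_ne_zero⟩, hm⟩
  choose m hm using n_eq_pow
  obtain rfl : n = fun i => p ^ (m i : ℕ) := funext hm
  obtain ⟨f⟩ := nonempty_clGroup_map_univ_addEquiv p m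
  exact ⟨_, ⟨e'.trans f.symm⟩⟩

end Prime

/-! ### Surjections and their kernels -/

section Surjections

variable (F G : Type*) [AddCommGroup F] [AddCommGroup G]

/-- The subgroups of `F` with quotient isomorphic to `G`, that is, the kernels of the surjections
`F → G`. -/
abbrev QuotientSubgroup := {L : AddSubgroup F // Nonempty (F ⧸ L ≃+ G)}

variable {F G} in
theorem index_quotientSubgroup (L : QuotientSubgroup F G) : L.1.index = Nat.card G :=
  Nat.card_congr L.2.some.toEquiv

/-- A surjection `F → G` amounts to its kernel `L` together with the induced isomorphism
`F ⧸ L ≃+ G`. -/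
noncomputable def surjectionEquiv :
    (Σ L : QuotientSubgroup F G, (F ⧸ L.1 ≃+ G)) ≃ {f : F →+ G // Function.Surjective f} :=
  Equiv.ofBijective
    (fun x => ⟨x.2.toAddMonoidHom.comp (QuotientAddGroup.mk' x.1.1),
      x.2.surjective.comp (QuotientAddGroup.mk'_surjective _)⟩) <| by
    constructor
    · rintro ⟨⟨L, hL⟩, e⟩ ⟨⟨L', hL'⟩, e'⟩ h
      have apply_mk (x : F) : e (x : F ⧸ L) = e' (x : F ⧸ L') :=
        DFunLike.congr_fun (congrArg Subtype.val h) x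
      obtain rfl : L = L' := by
        ext x
        rw [← QuotientAddGroup.eq_zero_iff, ← EmbeddingLike.map_eq_zero_iff (f := e), apply_mk,
          EmbeddingLike.map_eq_zero_iff, QuotientAddGroup.eq_zero_iff]
      obtain rfl : e = e' := by
        ext y
        obtain ⟨x, rfl⟩ := QuotientAddGroup.mk_surjective y
        exact apply_mk x
      rfl
    · rintro ⟨f, hf⟩
      let e := QuotientAddGroup.quotientKerEquivOfSurjective f hf
      exact ⟨⟨⟨f.ker, ⟨e⟩⟩, e⟩, rfl⟩

theorem numSur_eq_card_quotientSubgroup_mul_numAut :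
    numSur F G = Nat.card (QuotientSubgroup F G) * numAut G := by
  have compose (L : QuotientSubgroup F G) : (F ⧸ L.1 ≃+ G) ≃ (G ≃+ G) :=
    { toFun := L.2.some.symm.trans
      invFun := L.2.some.trans
      left_inv := fun e => by ext; simp
      right_inv := fun e => by ext; simp }
  rw [numSur, numAut, ← Nat.card_prod, ← Nat.card_congr (surjectionEquiv F G),
    Nat.card_congr ((Equiv.sigmaCongrRight compose).trans (Equiv.sigmaEquivProd _ _))]

theorem numAut_ne_zero [Finite G] : numAut G ≠ 0 := by
  have : Finite (G ≃+ G) := DFunLike.finite _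
  exact Nat.card_pos.ne'

instance finite_quotientSubgroup [Finite (F →+ G)] : Finite (QuotientSubgroup F G) := by
  have := Finite.of_equiv _ (surjectionEquiv F G).symm
  exact Finite.of_surjective
    (fun x : (Σ L : QuotientSubgroup F G, (F ⧸ L.1 ≃+ G)) => x.1) fun L => ⟨⟨L, L.2.some⟩, rfl⟩

end Surjections

/-! ### Random generation of a finite group -/

section Generation

/-- A homomorphism out of `ℤ^ι` is determined by the images of the standard basis vectors, which
are arbitrary. -/
noncomputable def piIntHomEquiv (ι G : Type*) [Finite ι] [AddCommGroup G] :
    ((ι → ℤ) →+ G) ≃ (ι → G) :=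
  (addMonoidHomLequivInt ℤ).toEquiv.trans ((Pi.basisFun ℤ ι).constr ℤ).symm.toEquiv

theorem piIntHomEquiv_apply {ι G : Type*} [Finite ι] [DecidableEq ι] [AddCommGroup G]
    (f : (ι → ℤ) →+ G) (i : ι) : piIntHomEquiv ι G f i = f (Pi.single i 1) := by
  simp [piIntHomEquiv, Module.Basis.constr]

instance finite_piInt_addMonoidHom (ι G : Type*) [Finite ι] [AddCommGroup G] [Finite G] :
    Finite ((ι → ℤ) →+ G) :=
  Finite.of_equiv _ (piIntHomEquiv ι G).symm

/-- The probability that `k` independent uniformly random elements of a finite group `G`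
generate it. -/
noncomputable def genProb (k : ℕ) (G : Type*) [AddCommGroup G] : ℝ≥0∞ :=
  numSur (Fin k → ℤ) G / (Nat.card G : ℝ≥0∞) ^ k

variable (ι G : Type*) [Fintype ι] [AddCommGroup G] [Finite G]

theorem numSur_piInt_le : numSur (ι → ℤ) G ≤ Nat.card G ^ Fintype.card ι :=
  calc numSur (ι → ℤ) G
      ≤ Nat.card ((ι → ℤ) →+ G) := Nat.card_le_card_of_injective _ Subtype.val_injective
    _ = Nat.card G ^ Fintype.card ι := by
      rw [Nat.card_congr (piIntHomEquiv ι G), Nat.card_fun, Nat.card_eq_fintype_card (α := ι)]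

/- Union bound: a homomorphism that is not surjective misses some `g` on the basis vectors. -/
theorem card_pow_le_numSur_piInt_add :
    Nat.card G ^ Fintype.card ι ≤
      numSur (ι → ℤ) G + Nat.card G * (Nat.card G - 1) ^ Fintype.card ι := by
  have := Fintype.ofFinite G
  let cover : {f : (ι → ℤ) →+ G // Function.Surjective f} ⊕ (Σ g : G, ι → {x : G // x ≠ g}) →
      (ι → G) :=
    Sum.elim (fun f => piIntHomEquiv ι G f.1) fun x i => (x.2 i).1
  have cover_surjective : Function.Surjective cover := by
    intro v
    by_cases h : Function.Surjective v
    · refine ⟨Sum.inl ⟨(piIntHomEquiv ι G).symm v, fun g => ?_⟩, Equiv.apply_symm_apply _ _⟩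
      obtain ⟨i, rfl⟩ := h g
      exact ⟨Pi.single i 1, by rw [← piIntHomEquiv_apply, Equiv.apply_symm_apply]⟩
    · simp only [Function.Surjective, not_forall, not_exists] at h
      obtain ⟨g, hg⟩ := h
      exact ⟨Sum.inr ⟨g, fun i => ⟨v i, hg i⟩⟩, rfl⟩
  have := Nat.card_le_card_of_surjective cover cover_surjective
  rw [Nat.card_sum, Nat.card_fun, Nat.card_sigma] at this
  simpa [numSur, Nat.card_eq_fintype_card, Fintype.card_subtype_compl] using this

theorem genProb_le_one (k : ℕ) : genProb k G ≤ 1 := by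
  refine ENNReal.div_le_of_le_mul ?_
  rw [one_mul]
  exact_mod_cast (numSur_piInt_le (Fin k) G).trans_eq (by rw [Fintype.card_fin])

theorem tendsto_genProb : Tendsto (genProb · G) atTop (𝓝 1) := by
  set n := Nat.card G with hn
  have n_ne_zero : (n : ℝ≥0∞) ≠ 0 := by exact_mod_cast Nat.card_pos.ne'
  have n_ne_top : (n : ℝ≥0∞) ≠ ∞ := ENNReal.natCast_ne_top n
  have ratio_lt_one : ((n - 1 : ℕ) : ℝ≥0∞) / n < 1 := by
    rw [ENNReal.div_lt_iff (.inl n_ne_zero) (.inl n_ne_top), one_mul]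
    exact_mod_cast Nat.sub_lt Nat.card_pos one_pos
  have lower (k : ℕ) : 1 - n * (((n - 1 : ℕ) : ℝ≥0∞) / n) ^ k ≤ genProb k G := by
    have card_pow_le : (n : ℝ≥0∞) ^ k ≤ numSur (Fin k → ℤ) G + n * ((n - 1 : ℕ) : ℝ≥0∞) ^ k := by
      have := card_pow_le_numSur_piInt_add (Fin k) G
      rw [Fintype.card_fin] at this
      exact_mod_cast this
    rw [tsub_le_iff_right, genProb, ← hn]
    calc (1 : ℝ≥0∞) = (n : ℝ≥0∞) ^ k / (n : ℝ≥0∞) ^ k :=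
          (ENNReal.div_self (pow_ne_zero k n_ne_zero) (ENNReal.pow_ne_top n_ne_top)).symm
      _ ≤ (numSur (Fin k → ℤ) G + n * ((n - 1 : ℕ) : ℝ≥0∞) ^ k) / (n : ℝ≥0∞) ^ k := by gcongr
      _ = _ := by
        simp only [div_eq_mul_inv, add_mul, mul_pow, ENNReal.inv_pow, mul_assoc]
  refine tendsto_of_tendsto_of_tendsto_of_le_of_le ?_ tendsto_const_nhds lower
    fun k => genProb_le_one G k
  have := ENNReal.Tendsto.const_mul (a := n)
    (ENNReal.tendsto_pow_atTop_nhds_zero_of_lt_one ratio_lt_one) (.inr n_ne_top)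
  simpa using ENNReal.Tendsto.sub tendsto_const_nhds this (.inl ENNReal.one_ne_top)

end Generation

/-! ### The subgroup zeta function of `ℤᵏ` -/

section ProdInt

theorem index_eq_index_comap_inl_mul_index_map_snd {G H : Type*} [AddCommGroup G] [AddCommGroup H]
    (M : AddSubgroup (G × H)) :
    M.index = (M.comap (AddMonoidHom.inl G H)).index * (M.map (AddMonoidHom.snd G H)).index := by
  have range_inl : (AddMonoidHom.inl G H).range = (AddMonoidHom.snd G H).ker := by
    ext ⟨g, h⟩
    rw [AddMonoidHom.mem_ker]
    simp [eq_comm]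
  have range_snd : (AddMonoidHom.snd G H).range = ⊤ :=
    AddMonoidHom.range_eq_top.2 Prod.snd_surjective
  rw [AddSubgroup.index_comap, range_inl, AddSubgroup.index_map, range_snd, AddSubgroup.index_top,
    mul_one, ← AddSubgroup.relIndex_sup_left, AddSubgroup.relIndex_mul_index le_sup_left]

variable {G : Type*} [AddCommGroup G]

/-- The subgroup of `G × ℤ` generated by `L × 0` and `(g, n)`, where `g` is any representative of
the coset `c`. Every subgroup of `G × ℤ` has this form. -/
def prodIntSubgroup (L : AddSubgroup G) (n : ℤ) (c : G ⧸ L) : AddSubgroup (G × ℤ) :=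
  (AddSubgroup.zmultiples (c, n)).comap ((QuotientAddGroup.mk' L).prodMap (AddMonoidHom.id ℤ))

theorem mem_prodIntSubgroup {L : AddSubgroup G} {n : ℤ} {c : G ⧸ L} {x : G × ℤ} :
    x ∈ prodIntSubgroup L n c ↔ ∃ t : ℤ, t • c = x.1 ∧ t * n = x.2 := by
  simp [prodIntSubgroup, AddSubgroup.mem_zmultiples_iff, Prod.ext_iff]

theorem prodIntSubgroup_comap_inl (L : AddSubgroup G) {n : ℤ} (hn : n ≠ 0) (c : G ⧸ L) :
    (prodIntSubgroup L n c).comap (AddMonoidHom.inl G ℤ) = L := by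
  ext g
  simp only [AddSubgroup.mem_comap, mem_prodIntSubgroup, AddMonoidHom.inl_apply, mul_eq_zero, hn,
    or_false, exists_eq_right, zero_smul]
  rw [eq_comm, QuotientAddGroup.eq_zero_iff]

theorem prodIntSubgroup_map_snd (L : AddSubgroup G) (n : ℤ) (c : G ⧸ L) :
    (prodIntSubgroup L n c).map (AddMonoidHom.snd G ℤ) = AddSubgroup.zmultiples n := by
  ext z
  simp only [AddSubgroup.mem_map, mem_prodIntSubgroup, AddSubgroup.mem_zmultiples_iff]
  constructor
  · rintro ⟨x, ⟨t, -, ht⟩, rfl⟩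
    exact ⟨t, ht⟩
  · rintro ⟨t, rfl⟩
    obtain ⟨g, hg⟩ := QuotientAddGroup.mk_surjective (t • c)
    exact ⟨(g, t • n), ⟨t, hg.symm, rfl⟩, rfl⟩

theorem mk_mem_prodIntSubgroup_iff {L : AddSubgroup G} {n : ℤ} (hn : n ≠ 0) {c : G ⧸ L} {g : G} :
    (g, n) ∈ prodIntSubgroup L n c ↔ (g : G ⧸ L) = c := by
  simp only [mem_prodIntSubgroup, mul_eq_right₀ hn, exists_eq_right, one_smul, eq_comm]

theorem index_prodIntSubgroup (L : AddSubgroup G) {n : ℤ} (hn : n ≠ 0) (c : G ⧸ L) :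
    (prodIntSubgroup L n c).index = L.index * n.natAbs := by
  rw [index_eq_index_comap_inl_mul_index_map_snd, prodIntSubgroup_comap_inl L hn,
    prodIntSubgroup_map_snd, Int.index_zmultiples]

theorem prodIntSubgroup_comap_inl_mk {M : AddSubgroup (G × ℤ)} {g : G} {n : ℤ}
    (hM : M.map (AddMonoidHom.snd G ℤ) = AddSubgroup.zmultiples n) (hg : (g, n) ∈ M) :
    prodIntSubgroup (M.comap (AddMonoidHom.inl G ℤ)) n g = M := by
  have smul_mk_eq_iff (t : ℤ) (x : G) :
      t • (g : G ⧸ M.comap (AddMonoidHom.inl G ℤ)) = x ↔ (x, t * n) ∈ M := by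
    rw [← QuotientAddGroup.mk_zsmul, QuotientAddGroup.eq, AddSubgroup.mem_comap,
      ← M.add_mem_cancel_left (M.zsmul_mem hg t)]
    simp
  ext ⟨x, z⟩
  simp only [mem_prodIntSubgroup, smul_mk_eq_iff]
  constructor
  · rintro ⟨t, ht, rfl⟩
    exact ht
  · intro hx
    have hz : z ∈ M.map (AddMonoidHom.snd G ℤ) := ⟨_, hx, rfl⟩
    rw [hM] at hz
    obtain ⟨t, rfl⟩ := AddSubgroup.mem_zmultiples_iff.1 hz
    exact ⟨t, hx, rfl⟩

end ProdInt

theorem eq_zmultiples_index (H : AddSubgroup ℤ) : H = AddSubgroup.zmultiples (H.index : ℤ) := by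
  obtain ⟨a, rfl⟩ := Int.subgroup_cyclic H
  rw [← AddSubgroup.zmultiples_eq_closure, Int.index_zmultiples, Int.zmultiples_natAbs]

/-- The subgroups of `G` whose index is a power of `p`. -/
abbrev PPowIndexSubgroup (p : ℕ) (G : Type*) [AddCommGroup G] :=
  {L : AddSubgroup G // ∃ n, L.index = p ^ n}

/-- The `p`-part of the subgroup zeta function of `G`: the sum of `[G : L]⁻ˢ` over the subgroups
`L` of `p`-power index, at a natural number `s`. -/
noncomputable def subgroupZeta (p : ℕ) (G : Type*) [AddCommGroup G] (s : ℕ) : ℝ≥0∞ :=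
  ∑' L : PPowIndexSubgroup p G, ((L.1.index : ℝ≥0∞)⁻¹) ^ s

section Zeta

theorem subgroupZeta_congr (p : ℕ) {G H : Type*} [AddCommGroup G] [AddCommGroup H] (e : G ≃+ H)
    (s : ℕ) : subgroupZeta p G s = subgroupZeta p H s := by
  have index_map (L : AddSubgroup G) : (e.mapAddSubgroup L).index = L.index :=
    AddSubgroup.index_map_equiv L e
  let E : PPowIndexSubgroup p G ≃ PPowIndexSubgroup p H :=
    e.mapAddSubgroup.toEquiv.subtypeEquiv fun L => by
      change _ ↔ ∃ n, (e.mapAddSubgroup L).index = p ^ n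
      rw [index_map]
  unfold subgroupZeta
  rw [← E.tsum_eq]
  refine tsum_congr fun L => ?_
  rw [← index_map]
  rfl

theorem subgroupZeta_of_subsingleton (p : ℕ) (G : Type*) [AddCommGroup G] [Subsingleton G]
    (s : ℕ) : subgroupZeta p G s = 1 := by
  have index_eq_one (L : AddSubgroup G) : L.index = 1 := by
    rw [Subsingleton.elim L ⊤, AddSubgroup.index_top]
  have : Unique (PPowIndexSubgroup p G) :=
    { default := ⟨⊤, 0, index_eq_one ⊤⟩
      uniq := fun L => Subsingleton.elim _ _ }
  simp [subgroupZeta, index_eq_one]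

variable {p : ℕ} [hp : Fact p.Prime]

theorem PPowIndexSubgroup.finite_quotient {G : Type*} [AddCommGroup G]
    (L : PPowIndexSubgroup p G) : Finite (G ⧸ L.1) := by
  obtain ⟨L, n, hn⟩ := L
  have : L.FiniteIndex := ⟨hn ▸ pow_ne_zero n hp.out.ne_zero⟩
  exact AddSubgroup.finite_quotient_of_finiteIndex

variable (p) in
theorem natCast_prime_pow_ne_zero (m : ℕ) : ((p ^ m : ℕ) : ℤ) ≠ 0 := by
  exact_mod_cast pow_ne_zero m hp.out.ne_zero

variable (p) in
/-- The subgroup `prodIntSubgroup L (p ^ m) c`, bundled with the fact that its index is a power of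
`p`. -/
def prodIntPPowIndexSubgroup {G : Type*} [AddCommGroup G]
    (x : Σ L : PPowIndexSubgroup p G, ℕ × (G ⧸ L.1)) : PPowIndexSubgroup p (G × ℤ) :=
  ⟨prodIntSubgroup x.1.1 (p ^ x.2.1 : ℕ) x.2.2, by
    obtain ⟨⟨L, n, hn⟩, m, c⟩ := x
    exact ⟨n + m, by
      rw [index_prodIntSubgroup L (natCast_prime_pow_ne_zero p m), hn, Int.natAbs_natCast,
        pow_add]⟩⟩

theorem prodIntPPowIndexSubgroup_injective {G : Type*} [AddCommGroup G] :
    Function.Injective (prodIntPPowIndexSubgroup p (G := G)) := by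
  rintro ⟨⟨L, hL⟩, m, c⟩ ⟨⟨L', hL'⟩, m', c'⟩ h
  replace h : prodIntSubgroup L (p ^ m : ℕ) c = prodIntSubgroup L' (p ^ m' : ℕ) c' :=
    congrArg Subtype.val h
  obtain rfl : L = L' := by
    rw [← prodIntSubgroup_comap_inl L (natCast_prime_pow_ne_zero p m) c, h,
      prodIntSubgroup_comap_inl L' (natCast_prime_pow_ne_zero p m')]
  obtain rfl : m = m' := by
    have := congrArg (fun M => (M.map (AddMonoidHom.snd G ℤ)).index) h
    simp only [prodIntSubgroup_map_snd, Int.index_zmultiples, Int.natAbs_natCast] at this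
    exact Nat.pow_right_injective hp.out.two_le this
  obtain rfl : c = c' := by
    obtain ⟨g, rfl⟩ := QuotientAddGroup.mk_surjective c
    rw [← mk_mem_prodIntSubgroup_iff (natCast_prime_pow_ne_zero p m), ← h,
      mk_mem_prodIntSubgroup_iff (natCast_prime_pow_ne_zero p m)]
  rfl

theorem prodIntPPowIndexSubgroup_surjective {G : Type*} [AddCommGroup G] :
    Function.Surjective (prodIntPPowIndexSubgroup p (G := G)) := by
  rintro ⟨M, N, hN⟩
  have index_mul := (index_eq_index_comap_inl_mul_index_map_snd M).symm.trans hN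
  obtain ⟨a, -, ha⟩ := (Nat.dvd_prime_pow hp.out).1 (Dvd.intro _ index_mul)
  obtain ⟨m, -, hm⟩ := (Nat.dvd_prime_pow hp.out).1 (Dvd.intro_left _ index_mul)
  have map_snd : M.map (AddMonoidHom.snd G ℤ) = AddSubgroup.zmultiples ((p ^ m : ℕ) : ℤ) :=
    hm ▸ eq_zmultiples_index _
  obtain ⟨⟨g, z⟩, hg, rfl : z = _⟩ := map_snd ▸ AddSubgroup.mem_zmultiples ((p ^ m : ℕ) : ℤ)
  exact ⟨⟨⟨M.comap (AddMonoidHom.inl G ℤ), a, ha⟩, m, g⟩,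
    Subtype.ext (prodIntSubgroup_comap_inl_mk map_snd hg)⟩

theorem subgroupZeta_prod_int (G : Type*) [AddCommGroup G] (s : ℕ) :
    subgroupZeta p (G × ℤ) (s + 1) =
      subgroupZeta p G s * (1 - ((p : ℝ≥0∞)⁻¹) ^ (s + 1))⁻¹ := by
  have term (L : PPowIndexSubgroup p G) (m : ℕ) (c : G ⧸ L.1) :
      (((prodIntPPowIndexSubgroup p ⟨L, m, c⟩).1.index : ℝ≥0∞)⁻¹) ^ (s + 1) =
        ((L.1.index : ℝ≥0∞)⁻¹) ^ (s + 1) * (((p : ℝ≥0∞)⁻¹) ^ (s + 1)) ^ m := by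
    have : (prodIntPPowIndexSubgroup p ⟨L, m, c⟩).1.index = L.1.index * p ^ m :=
      index_prodIntSubgroup L.1 (natCast_prime_pow_ne_zero p m) c
    rw [this, Nat.cast_mul, Nat.cast_pow, ENNReal.mul_inv (by simp) (by simp), mul_pow,
      ENNReal.inv_pow, pow_right_comm]
  have sum_cosets (L : PPowIndexSubgroup p G) (a : ℝ≥0∞) :
      ∑' _ : G ⧸ L.1, ((L.1.index : ℝ≥0∞)⁻¹) ^ (s + 1) * a = ((L.1.index : ℝ≥0∞)⁻¹) ^ s * a := by
    have := L.finite_quotient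
    have index_ne_zero : (L.1.index : ℝ≥0∞) ≠ 0 := by exact_mod_cast Nat.card_pos.ne'
    rw [ENNReal.tsum_const, ENat.card_eq_coe_natCard, ← AddSubgroup.index_eq_card,
      ENat.toENNReal_coe, pow_succ', ← mul_assoc, ← mul_assoc,
      ENNReal.mul_inv_cancel index_ne_zero (ENNReal.natCast_ne_top _), one_mul]
  let E := Equiv.ofBijective (prodIntPPowIndexSubgroup p (G := G))
    ⟨prodIntPPowIndexSubgroup_injective, prodIntPPowIndexSubgroup_surjective⟩
  unfold subgroupZeta
  rw [← E.tsum_eq, ENNReal.tsum_sigma', ← ENNReal.tsum_mul_right]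
  refine tsum_congr fun L => ?_
  rw [ENNReal.tsum_prod', ← ENNReal.tsum_geometric, ← ENNReal.tsum_mul_left]
  refine tsum_congr fun m => ?_
  exact (tsum_congr fun c => term L m c).trans (sum_cosets L _)

theorem subgroupZeta_fin_int (k s : ℕ) :
    subgroupZeta p (Fin k → ℤ) (s + k) =
      ∏ j ∈ range k, (1 - ((p : ℝ≥0∞)⁻¹) ^ (s + j + 1))⁻¹ := by
  induction k with
  | zero => rw [subgroupZeta_of_subsingleton, prod_range_zero]
  | succ k ih =>
    let snoc : ((Fin k → ℤ) × ℤ) ≃+ (Fin (k + 1) → ℤ) :=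
      AddEquiv.prodComm.trans (Fin.consLinearEquiv ℤ fun _ : Fin (k + 1) => ℤ).toAddEquiv
    rw [prod_range_succ, ← ih, ← add_assoc, ← subgroupZeta_prod_int, subgroupZeta_congr p snoc]

/-- Grouping the subgroups of `F` of `p`-power index by the isomorphism type of the quotient. -/
noncomputable def sigmaQuotientSubgroupEquiv (p : ℕ) [hp : Fact p.Prime] (F : Type*)
    [AddCommGroup F] :
    (Σ lam : Multiset ℕ+, QuotientSubgroup F (CLGroup p lam)) ≃ PPowIndexSubgroup p F :=
  Equiv.ofBijective
    (fun x => ⟨x.2.1, _, (index_quotientSubgroup x.2).trans (card_clGroup p x.1)⟩) <| by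
    constructor
    · rintro ⟨l, L, ⟨e⟩⟩ ⟨l', L', ⟨e'⟩⟩ h
      obtain rfl : L = L' := congrArg Subtype.val h
      obtain rfl := eq_of_clGroup_addEquiv (e.symm.trans e')
      rfl
    · rintro ⟨L, n, hn⟩
      obtain ⟨l, e⟩ := exists_addEquiv_clGroup (F ⧸ L) hn
      exact ⟨⟨l, L, e⟩, rfl⟩

theorem subgroupZeta_eq_tsum_clGroup (F : Type*) [AddCommGroup F] (s : ℕ) :
    subgroupZeta p F s = ∑' lam : Multiset ℕ+,
      ENat.card (QuotientSubgroup F (CLGroup p lam)) *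
        ((Nat.card (CLGroup p lam) : ℝ≥0∞)⁻¹) ^ s := by
  unfold subgroupZeta
  rw [← (sigmaQuotientSubgroupEquiv p F).tsum_eq, ENNReal.tsum_sigma']
  refine tsum_congr fun lam => ?_
  rw [← ENNReal.tsum_const]
  refine tsum_congr fun L => ?_
  rw [← index_quotientSubgroup L]
  rfl

end Zeta

/-! ### The Cohen–Lenstra measure -/

/-- The Cohen–Lenstra measure without its normalising constant, with values in `ℝ≥0∞`. -/
noncomputable def clWeight (u : ℕ) (G : Type*) [AddCommGroup G] : ℝ≥0∞ :=
  ((Nat.card G : ℝ≥0∞) ^ u)⁻¹ * (numAut G : ℝ≥0∞)⁻¹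

theorem clMeasure_eq_toReal_clWeight_mul_clProd (p u : ℕ) (G : Type*) [AddCommGroup G] :
    clMeasure p u G = (clWeight u G).toReal * clProd p u := by
  simp [clMeasure, clWeight]

theorem genProb_mul_clWeight (k u : ℕ) (G : Type*) [AddCommGroup G] [Finite G] :
    genProb k G * clWeight u G =
      ENat.card (QuotientSubgroup (Fin k → ℤ) G) * ((Nat.card G : ℝ≥0∞)⁻¹) ^ (u + k) := by
  have numAut_mul_inv : (numAut G : ℝ≥0∞) * (numAut G : ℝ≥0∞)⁻¹ = 1 :=
    ENNReal.mul_inv_cancel (by exact_mod_cast numAut_ne_zero G) (ENNReal.natCast_ne_top _)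
  rw [genProb, clWeight, numSur_eq_card_quotientSubgroup_mul_numAut, ENat.card_eq_coe_natCard,
    ENat.toENNReal_coe, Nat.cast_mul, div_eq_mul_inv, ENNReal.inv_pow, ENNReal.inv_pow]
  set q := Nat.card (QuotientSubgroup (Fin k → ℤ) G)
  set c := (Nat.card G : ℝ≥0∞)⁻¹
  calc (q : ℝ≥0∞) * numAut G * c ^ k * (c ^ u * (numAut G : ℝ≥0∞)⁻¹)
      = q * c ^ (u + k) * (numAut G * (numAut G : ℝ≥0∞)⁻¹) := by ring
    _ = q * c ^ (u + k) := by rw [numAut_mul_inv, mul_one]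

theorem tsum_genProb_mul_clWeight (p : ℕ) [Fact p.Prime] (k u : ℕ) :
    ∑' lam, genProb k (CLGroup p lam) * clWeight u (CLGroup p lam) =
      ∏ j ∈ range k, (1 - ((p : ℝ≥0∞)⁻¹) ^ (u + j + 1))⁻¹ := by
  simp only [genProb_mul_clWeight, ← subgroupZeta_fin_int, subgroupZeta_eq_tsum_clGroup]

section Normalisation

variable {p : ℕ}

theorem clProd_eq_tprod (p u : ℕ) : clProd p u = ∏' j : ℕ, (1 - (p : ℝ)⁻¹ ^ (u + j + 1)) := by
  refine tprod_congr fun j => ?_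
  rw [zpow_neg, inv_pow, ← zpow_natCast]
  push_cast
  ring_nf

theorem inv_pow_lt_one (hp : 1 < p) (n : ℕ) : (p : ℝ)⁻¹ ^ (n + 1) < 1 :=
  pow_lt_one₀ (by positivity) (inv_lt_one_of_one_lt₀ (by exact_mod_cast hp)) n.succ_ne_zero

theorem summable_norm_neg_inv_pow (hp : 1 < p) (u : ℕ) :
    Summable fun j : ℕ => ‖-(p : ℝ)⁻¹ ^ (u + j + 1)‖ := by
  have := (summable_geometric_of_lt_one (by positivity)
    (inv_lt_one_of_one_lt₀ (by exact_mod_cast hp : (1 : ℝ) < p))).mul_right ((p : ℝ)⁻¹ ^ (u + 1))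
  refine this.congr fun j => ?_
  rw [norm_neg, Real.norm_of_nonneg (by positivity), ← pow_add]
  ring_nf

theorem multipliable_one_sub_inv_pow (hp : 1 < p) (u : ℕ) :
    Multipliable fun j : ℕ => 1 - (p : ℝ)⁻¹ ^ (u + j + 1) := by
  simpa only [← sub_eq_add_neg] using
    multipliable_one_add_of_summable (summable_norm_neg_inv_pow hp u)

theorem tendsto_prod_clProd (hp : 1 < p) (u : ℕ) :
    Tendsto (fun k => ∏ j ∈ range k, (1 - (p : ℝ)⁻¹ ^ (u + j + 1))) atTop (𝓝 (clProd p u)) := by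
  rw [clProd_eq_tprod]
  exact (multipliable_one_sub_inv_pow hp u).hasProd.tendsto_prod_nat

theorem clProd_pos (hp : 1 < p) (u : ℕ) : 0 < clProd p u := by
  have factor_pos (j : ℕ) : 0 < 1 - (p : ℝ)⁻¹ ^ (u + j + 1) := sub_pos.2 (inv_pow_lt_one hp _)
  have nonneg : 0 ≤ clProd p u :=
    ge_of_tendsto' (tendsto_prod_clProd hp u) fun k => prod_nonneg fun j _ => (factor_pos j).le
  have ne_zero : clProd p u ≠ 0 := by
    rw [clProd_eq_tprod]
    simp only [sub_eq_add_neg] at factor_pos ⊢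
    exact tprod_one_add_ne_zero_of_summable (fun j => (factor_pos j).ne')
      (summable_norm_neg_inv_pow hp u)
  exact nonneg.lt_of_ne' ne_zero

theorem clProd_eq_mul_clProd_succ (hp : 1 < p) (u : ℕ) :
    clProd p u = (1 - (p : ℝ)⁻¹ ^ (u + 1)) * clProd p (u + 1) := by
  have reindex (j : ℕ) : u + (j + 1) + 1 = u + 1 + j + 1 := by ring
  rw [clProd_eq_tprod, clProd_eq_tprod, tprod_eq_zero_mul', add_zero]
  · simp only [reindex]
  · simpa only [reindex] using multipliable_one_sub_inv_pow hp (u + 1)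

theorem clMeasure_div_card (hp : 1 < p) (u : ℕ) (G : Type*) [AddCommGroup G] :
    clMeasure p u G / Nat.card G = (1 - (p : ℝ)⁻¹ ^ (u + 1)) * clMeasure p (u + 1) G := by
  rw [clMeasure, clMeasure, clProd_eq_mul_clProd_succ hp, pow_succ (Nat.card G : ℝ), mul_inv]
  ring

theorem ofReal_one_sub_inv_pow (hp : 1 < p) (n : ℕ) :
    ENNReal.ofReal (1 - (p : ℝ)⁻¹ ^ n) = 1 - ((p : ℝ≥0∞)⁻¹) ^ n := by
  rw [ENNReal.ofReal_sub _ (by positivity), ENNReal.ofReal_one,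
    ENNReal.ofReal_pow (by positivity), ENNReal.ofReal_inv_of_pos (by positivity),
    ENNReal.ofReal_natCast]

theorem tendsto_prod_one_sub_inv_pow_inv (hp : 1 < p) (u : ℕ) :
    Tendsto (fun k => ∏ j ∈ range k, (1 - ((p : ℝ≥0∞)⁻¹) ^ (u + j + 1))⁻¹) atTop
      (𝓝 (ENNReal.ofReal (clProd p u))⁻¹) := by
  refine (ENNReal.tendsto_ofReal (tendsto_prod_clProd hp u)).inv.congr fun k => ?_
  rw [ENNReal.ofReal_prod_of_nonneg fun j _ => (sub_pos.2 (inv_pow_lt_one hp _)).le,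
    ← ENNReal.prod_inv_distrib]
  · simp only [ofReal_one_sub_inv_pow hp]
  · exact fun i _ j _ _ => .inr (ENNReal.sub_ne_top ENNReal.one_ne_top)

end Normalisation

theorem tendsto_tsum_of_le_of_tendsto {ι κ : Type*} {l : Filter κ} {f : κ → ι → ℝ≥0∞}
    {g : ι → ℝ≥0∞} (hle : ∀ k i, f k i ≤ g i) (hlim : ∀ i, Tendsto (f · i) l (𝓝 (g i))) :
    Tendsto (fun k => ∑' i, f k i) l (𝓝 (∑' i, g i)) := by
  refine tendsto_order.2 ⟨fun a ha => ?_, fun a ha => ?_⟩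
  · rw [ENNReal.tsum_eq_iSup_sum] at ha
    obtain ⟨s, hs⟩ := lt_iSup_iff.1 ha
    have partial_sums := tendsto_finsetSum s fun i _ => hlim i
    filter_upwards [partial_sums.eventually_const_lt hs] with k hk
    exact hk.trans_le (ENNReal.sum_le_tsum s)
  · exact .of_forall fun k => (ENNReal.tsum_le_tsum (hle k)).trans_lt ha

section TotalMass

variable (p : ℕ) [hp : Fact p.Prime] (u : ℕ)

theorem tsum_clWeight :
    ∑' lam, clWeight u (CLGroup p lam) = (ENNReal.ofReal (clProd p u))⁻¹ := by
  have lim : Tendsto (fun k => ∑' lam, genProb k (CLGroup p lam) * clWeight u (CLGroup p lam))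
      atTop (𝓝 (∑' lam, clWeight u (CLGroup p lam))) := by
    refine tendsto_tsum_of_le_of_tendsto
      (fun k lam => mul_le_of_le_one_left' (genProb_le_one _ k)) fun lam => ?_
    simpa only [one_mul] using
      ENNReal.Tendsto.mul_const (tendsto_genProb (CLGroup p lam)) (.inl one_ne_zero)
  simp only [tsum_genProb_mul_clWeight] at lim
  exact tendsto_nhds_unique lim (tendsto_prod_one_sub_inv_pow_inv hp.out.one_lt u)

theorem hasSum_clMeasure : HasSum (fun lam => clMeasure p u (CLGroup p lam)) 1 := by
  have pos : 0 < clProd p u := clProd_pos hp.out.one_lt u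
  have tsum_ne_top : ∑' lam, clWeight u (CLGroup p lam) ≠ ∞ := by
    rw [tsum_clWeight]
    exact ENNReal.inv_ne_top.2 (ENNReal.ofReal_pos.2 pos).ne'
  have hasSum_weight := (ENNReal.hasSum_toReal tsum_ne_top).mul_right (clProd p u)
  rw [← ENNReal.tsum_toReal_eq (ENNReal.ne_top_of_tsum_ne_top tsum_ne_top), tsum_clWeight,
    ENNReal.toReal_inv, ENNReal.toReal_ofReal pos.le, inv_mul_cancel₀ pos.ne'] at hasSum_weight
  simpa only [clMeasure_eq_toReal_clWeight_mul_clProd] using hasSum_weight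

end TotalMass

end CohenLenstra

theorem cl_pointed_identity_prob_general (p : ℕ) (hp : p.Prime) (u : ℕ) :
    HasSum (fun lam : Multiset ℕ+ =>
      clMeasure p u (CLGroup p lam) / (Nat.card (CLGroup p lam) : ℝ))
      (1 - (p : ℝ)⁻¹ ^ (u + 1)) := by
  have : Fact p.Prime := ⟨hp⟩
  simpa only [CohenLenstra.clMeasure_div_card hp.one_lt, mul_one] using
    (CohenLenstra.hasSum_clMeasure p (u + 1)).mul_left (1 - (p : ℝ)⁻¹ ^ (u + 1))

/-- The sum over isomorphism classes of finite abelian `p`-groups `A` of `μ^0(A)/|A|` equals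
`1 - 1/p`: under the pointed Cohen–Lenstra measure, the probability that the marked element
is the identity is `1 - p⁻¹`. -/
theorem cl_pointed_identity_prob (p : ℕ) (hp : p.Prime) (hodd : Odd p) :
    ∑' lam : Multiset ℕ+,
      clMeasure p 0 (CLGroup p lam) / (Nat.card (CLGroup p lam) : ℝ)
      = 1 - (p : ℝ)⁻¹ := by
  simpa only [zero_add, pow_one] using (cl_pointed_identity_prob_general p hp 0).tsum_eq
end
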